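/- arXiv:1109.5250 — 3 statements merged into one kernel-verified Lean document; each statement's English description precedes it below -/
import Mathlib

section
/- Let s > 1, let u ∈ L¹(ℝ^d) have compact support, let Γ₀ ⊂⊂ Γ be open cones in ℝ^d ∖ {0}, and suppose there are C, k > 0 with |û(ξ)| ≤ C·exp(−k·|ξ|^{1/s}) for all ξ ∈ Γ. Then for every s-cutoff φ there exist C', k' > 0 such that |ℱ(φu)(ξ)| ≤ C'·exp(−k'·|ξ|^{1/s}) for all ξ ∈ Γ₀. -/
open MeasureTheory Complex Set
open scoped ENNReal RealInnerProductSpace NNReal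

noncomputable section

namespace Paper

variable {d : ℕ}

/-- The Fourier transform, normalized by `(2π)^{-d/2}`. -/
def FT (f : EuclideanSpace ℝ (Fin d) → ℂ) (ξ : EuclideanSpace ℝ (Fin d)) : ℂ :=
  ((2 * Real.pi) ^ (-(d : ℝ) / 2) : ℝ) *
    ∫ x, f x * Complex.exp (-(⟪x, ξ⟫ : ℝ) * Complex.I)

/-- The short-time Fourier transform `V_φ f (x, ξ)`. -/
def STFT (φ f : EuclideanSpace ℝ (Fin d) → ℂ) (x ξ : EuclideanSpace ℝ (Fin d)) : ℂ :=
  ((2 * Real.pi) ^ (-(d : ℝ) / 2) : ℝ) *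
    ∫ y, f y * (starRingEnd ℂ) (φ (y - x)) * Complex.exp (-(⟪ξ, y⟫ : ℝ) * Complex.I)

/-- A cone in `ℝ^d ∖ {0}`. -/
def IsCone (Γ : Set (EuclideanSpace ℝ (Fin d))) : Prop :=
  (0 : EuclideanSpace ℝ (Fin d)) ∉ Γ ∧ ∀ ξ ∈ Γ, ∀ t : ℝ, 0 < t → t • ξ ∈ Γ

/-- An `s`-cutoff: smooth, compactly supported, with Fourier transform decaying faster
than every `exp (-N |ξ|^{1/s})`. -/
def IsSCutoff (s : ℝ) (φ : EuclideanSpace ℝ (Fin d) → ℂ) : Prop :=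
  ContDiff ℝ (⊤ : ℕ∞) φ ∧ HasCompactSupport φ ∧
    ∀ N : ℝ, 0 < N → ∃ C : ℝ, 0 < C ∧
      ∀ ξ, ‖FT φ ξ‖ ≤ C * Real.exp (-N * ‖ξ‖ ^ (1 / s))

/-- An `s`-admissible weight: positive, measurable, and moderate with respect to an even
submultiplicative weight of sub-exponential growth of order `1/s`. -/
def IsSAdmissible (s : ℝ) (ω : EuclideanSpace ℝ (Fin d) → ℝ) : Prop :=
  Measurable ω ∧ (∀ x, 0 < ω x) ∧
    ∃ v : EuclideanSpace ℝ (Fin d) → ℝ, Measurable v ∧ (∀ x, 0 < v x) ∧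
      (∀ x, v (-x) = v x) ∧ (∀ x y, v (x + y) ≤ v x * v y) ∧
      ∃ C₀ k₀ C₁ : ℝ, 0 < C₀ ∧ 0 < k₀ ∧ 0 < C₁ ∧
        (∀ ξ, v ξ ≤ C₀ * Real.exp (k₀ * ‖ξ‖ ^ (1 / s))) ∧
        ∀ x y, ω (x + y) ≤ C₁ * v x * ω y

/-- The Fourier–Lebesgue seminorm `( ∫_Γ (|f̂| ω)^q )^{1/q}` (ess-sup when `q = ∞`). -/
def FLSemi (ω : EuclideanSpace ℝ (Fin d) → ℝ) (q : ℝ≥0∞)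
    (f : EuclideanSpace ℝ (Fin d) → ℂ) (Γ : Set (EuclideanSpace ℝ (Fin d))) : ℝ≥0∞ :=
  eLpNorm (fun ξ => ‖FT f ξ‖ * ω ξ) q (volume.restrict Γ)

/-- The Fourier–Lebesgue wave-front set `WF_{FL^q_ω} f`. -/
def WF_FL (s : ℝ) (q : ℝ≥0∞) (ω : EuclideanSpace ℝ (Fin d) → ℝ)
    (f : EuclideanSpace ℝ (Fin d) → ℂ) :
    Set (EuclideanSpace ℝ (Fin d) × EuclideanSpace ℝ (Fin d)) :=
  {z | z.2 ≠ 0 ∧ ∀ φ : EuclideanSpace ℝ (Fin d) → ℂ, IsSCutoff s φ → φ z.1 ≠ 0 →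
    ∀ Γ : Set (EuclideanSpace ℝ (Fin d)), IsOpen Γ → IsCone Γ → z.2 ∈ Γ →
      FLSemi ω q (fun x => φ x * f x) Γ = ∞}

/-- The `s`-wave-front set `WF_s f`. -/
def WFs (s : ℝ) (f : EuclideanSpace ℝ (Fin d) → ℂ) :
    Set (EuclideanSpace ℝ (Fin d) × EuclideanSpace ℝ (Fin d)) :=
  {z | z.2 ≠ 0 ∧ ¬ ∃ φ : EuclideanSpace ℝ (Fin d) → ℂ, IsSCutoff s φ ∧
    (∃ U : Set (EuclideanSpace ℝ (Fin d)), IsOpen U ∧ z.1 ∈ U ∧ ∀ x ∈ U, φ x = 1) ∧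
    ∃ Γ : Set (EuclideanSpace ℝ (Fin d)), IsOpen Γ ∧ IsCone Γ ∧ z.2 ∈ Γ ∧
      ∃ C k : ℝ, 0 < C ∧ 0 < k ∧
        ∀ ξ ∈ Γ, ‖FT (fun x => φ x * f x) ξ‖ ≤ C * Real.exp (-k * ‖ξ‖ ^ (1 / s))}

/-- The mixed modulation-space seminorm
`( ∫_Γ ( ∫ |V_g F(x,ξ)|^p dx )^{q/p} ω(ξ)^q dξ )^{1/q}` with the usual
ess-sup interpretations for `p = ∞` or `q = ∞`. -/
def ModSemi (g F : EuclideanSpace ℝ (Fin d) → ℂ) (ω : EuclideanSpace ℝ (Fin d) → ℝ)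
    (p q : ℝ≥0∞) (Γ : Set (EuclideanSpace ℝ (Fin d))) : ℝ≥0∞ :=
  if q = ∞ then
    essSup (fun ξ => eLpNorm (fun x => STFT g F x ξ) p volume * ENNReal.ofReal (ω ξ))
      (volume.restrict Γ)
  else
    (∫⁻ ξ in Γ, (eLpNorm (fun x => STFT g F x ξ) p volume * ENNReal.ofReal (ω ξ)) ^ q.toReal) ^
      (1 / q.toReal)

/-- The modulation wave-front set `WF_{M^{p,q}_ω} f`, with window `g`. -/
def WF_M (s : ℝ) (p q : ℝ≥0∞) (ω : EuclideanSpace ℝ (Fin d) → ℝ)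
    (g f : EuclideanSpace ℝ (Fin d) → ℂ) :
    Set (EuclideanSpace ℝ (Fin d) × EuclideanSpace ℝ (Fin d)) :=
  {z | z.2 ≠ 0 ∧ ∀ φ : EuclideanSpace ℝ (Fin d) → ℂ, IsSCutoff s φ → φ z.1 ≠ 0 →
    ∀ Γ : Set (EuclideanSpace ℝ (Fin d)), IsOpen Γ → IsCone Γ → z.2 ∈ Γ →
      ModSemi g (fun x => φ x * f x) ω p q Γ = ∞}

/-- Reinterpret a plain vector as a point of Euclidean space. -/
def toE (x : Fin d → ℝ) : EuclideanSpace ℝ (Fin d) :=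
  (EuclideanSpace.equiv (Fin d) ℝ).symm x

/-- The point `A k` of the lattice `A(ℤ^d)`. -/
def latPt (A : Matrix (Fin d) (Fin d) ℝ) (k : Fin d → ℤ) : EuclideanSpace ℝ (Fin d) :=
  toE (A.mulVec fun i => (k i : ℝ))

/-- The point `c (Aᵀ)⁻¹ k` of the dual lattice `c (Aᵀ)⁻¹(ℤ^d)`. -/
def dualLatPt (A : Matrix (Fin d) (Fin d) ℝ) (c : ℝ) (k : Fin d → ℤ) :
    EuclideanSpace ℝ (Fin d) :=
  toE (c • (A.transpose⁻¹.mulVec fun i => (k i : ℝ)))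

/-- The parallelepiped `x₁ + A([0,1]^d)`. -/
def lattPara (A : Matrix (Fin d) (Fin d) ℝ) (x₁ : EuclideanSpace ℝ (Fin d)) :
    Set (EuclideanSpace ℝ (Fin d)) :=
  (fun t : Fin d → ℝ => x₁ + toE (A.mulVec t)) '' (Set.univ.pi fun _ => Set.Icc 0 1)

/-- The adjoint short-time Fourier transform `V*_φ F`. -/
def VStar (φ : EuclideanSpace ℝ (Fin d) → ℂ)
    (F : EuclideanSpace ℝ (Fin d) × EuclideanSpace ℝ (Fin d) → ℂ)
    (t : EuclideanSpace ℝ (Fin d)) : ℂ :=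
  ((2 * Real.pi) ^ (-(d : ℝ) / 2) : ℝ) *
    ∫ z : EuclideanSpace ℝ (Fin d) × EuclideanSpace ℝ (Fin d),
      F z * Complex.exp ((⟪z.2, t⟫ : ℝ) * Complex.I) * φ (t - z.1)

open FourierTransform in
lemma FT_eq (f : EuclideanSpace ℝ (Fin d) → ℂ) (ξ : EuclideanSpace ℝ (Fin d)) :
    FT f ξ = ((2 * Real.pi) ^ (-(d : ℝ) / 2) : ℝ) * 𝓕 f ((2 * Real.pi)⁻¹ • ξ) := by
  unfold FT
  rw [Real.fourier_eq']
  congr 2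
  ext x
  rw [inner_smul_right, smul_eq_mul, mul_comm]
  congr 3
  have := Real.pi_ne_zero
  push_cast
  field_simp

open FourierTransform in
lemma norm_FT_smul (f : EuclideanSpace ℝ (Fin d) → ℂ) (η : EuclideanSpace ℝ (Fin d)) :
    ‖FT f ((2 * Real.pi) • η)‖ = (2 * Real.pi) ^ (-(d : ℝ) / 2) * ‖𝓕 f η‖ := by
  have := Real.pi_ne_zero
  rw [FT_eq, smul_smul, inv_mul_cancel₀ (by positivity), one_smul, norm_mul, Complex.norm_real,
    Real.norm_of_nonneg (by positivity)]

lemma integrable_exp_neg_norm_rpow {t : ℝ} (ht : 0 < t) (ht1 : t ≤ 1) :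
    Integrable (fun η : EuclideanSpace ℝ (Fin d) => Real.exp (-‖η‖ ^ t)) := by
  obtain ⟨n, hn⟩ := exists_nat_gt ((d : ℝ) / t)
  have hn' : (d : ℝ) < t * n := by
    rw [div_lt_iff₀ ht] at hn; linarith
  have h := (integrable_one_add_norm (E := EuclideanSpace ℝ (Fin d)) (μ := volume)
    (r := t * n) (by simpa using hn')).const_mul (Real.exp 1 * n.factorial)
  refine h.mono' ?_ ?_
  · apply Continuous.aestronglyMeasurable
    exact Real.continuous_exp.comp (continuous_norm.rpow_const (fun _ => Or.inr ht.le)).neg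
  · refine Filter.Eventually.of_forall fun η => ?_
    have h1 : (1 + ‖η‖) ^ t ≤ 1 + ‖η‖ ^ t := by
      simpa using Real.rpow_add_le_add_rpow zero_le_one (norm_nonneg η) ht.le ht1
    have h2 := Real.pow_div_factorial_le_exp ((1 + ‖η‖) ^ t) (by positivity) n
    have h3 : 0 < ((1 + ‖η‖) ^ t) ^ n := by positivity
    rw [Real.norm_of_nonneg (Real.exp_pos _).le, Real.rpow_neg (by positivity),
      Real.rpow_mul (by positivity), Real.rpow_natCast, ← div_eq_mul_inv, le_div_iff₀ h3]
    rw [div_le_iff₀ (by positivity)] at h2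
    calc Real.exp (-‖η‖ ^ t) * ((1 + ‖η‖) ^ t) ^ n
        ≤ Real.exp (-‖η‖ ^ t) * (Real.exp (1 + ‖η‖ ^ t) * n.factorial) := by
          gcongr
          refine h2.trans ?_
          gcongr
      _ = Real.exp 1 * n.factorial := by
          rw [← mul_assoc, ← Real.exp_add]; congr 2; ring

open FourierTransform in
lemma fourier_mul_eq (φ u : EuclideanSpace ℝ (Fin d) → ℂ) (hφc : Continuous φ)
    (hφ : Integrable φ) (hφ' : Integrable (𝓕 φ)) (hu : Integrable u)
    (ξ : EuclideanSpace ℝ (Fin d)) :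
    𝓕 (fun x => φ x * u x) ξ = ∫ η, 𝓕 φ (-η) * 𝓕 u (ξ + η) := by
  have hL : Continuous fun p : EuclideanSpace ℝ (Fin d) × EuclideanSpace ℝ (Fin d) =>
      (innerₗ (EuclideanSpace ℝ (Fin d))) p.1 p.2 := by
    simpa using continuous_inner
  have hg : Integrable (fun x : EuclideanSpace ℝ (Fin d) =>
      Real.fourierChar (-(innerₗ (EuclideanSpace ℝ (Fin d))) x ξ) • u x) :=
    (VectorFourier.fourierIntegral_convergent_iff Real.continuous_fourierChar hL ξ).2 hu
  have key := VectorFourier.integral_fourierIntegral_smul_eq_flip (μ := volume) (ν := volume)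
    (f := fun η => 𝓕 φ (-η)) Real.continuous_fourierChar hL hφ'.comp_neg hg
  have inv : ∀ x, VectorFourier.fourierIntegral Real.fourierChar volume
      (innerₗ (EuclideanSpace ℝ (Fin d))) (fun η => 𝓕 φ (-η)) x = φ x := by
    intro x
    have := congrFun (hφc.fourierInv_fourier_eq hφ hφ') x
    rw [Real.fourierInv_eq_fourier_comp_neg] at this
    exact this
  simp only [inv] at key
  rw [Real.fourier_eq]
  have e1 : ∀ v, Real.fourierChar (-⟪v, ξ⟫) • (φ v * u v) =
      φ v • Real.fourierChar (-(innerₗ (EuclideanSpace ℝ (Fin d))) v ξ) • u v := by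
    intro v
    simp only [innerₗ_apply_apply, Circle.smul_def, smul_eq_mul]
    ring
  simp only [e1]
  rw [key]
  congr 1
  ext η
  rw [smul_eq_mul, Real.fourier_eq u]
  congr 1
  unfold VectorFourier.fourierIntegral
  congr 1
  ext v
  simp only [flip_innerₗ, innerₗ_apply_apply, inner_add_right, neg_add, AddChar.map_add_eq_mul,
    mul_smul]
  rw [smul_comm]

lemma cone_delta (Γ₀ Γ : Set (EuclideanSpace ℝ (Fin d)))
    (h₀c : IsCone Γ₀) (hΓo : IsOpen Γ) (hΓc : IsCone Γ) (hsub : closure Γ₀ \ {0} ⊆ Γ) :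
    ∃ δ : ℝ, 0 < δ ∧ δ ≤ 1 / 2 ∧ ∀ ξ ∈ Γ₀, ∀ η, ‖η‖ < δ * ‖ξ‖ → ξ + η ∈ Γ := by
  have hK : IsCompact (closure Γ₀ ∩ Metric.sphere 0 1) :=
    (isCompact_sphere _ _).inter_left isClosed_closure
  have hKΓ : closure Γ₀ ∩ Metric.sphere 0 1 ⊆ Γ := by
    rintro x ⟨hx, hx1⟩
    refine hsub ⟨hx, ?_⟩
    rintro rfl
    simp at hx1
  obtain ⟨δ, hδ, hδΓ⟩ := hK.exists_thickening_subset_open hΓo hKΓ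
  refine ⟨min δ (1 / 2), by positivity, min_le_right _ _, fun ξ hξ η hη => ?_⟩
  have hξ0 : ξ ≠ 0 := fun h => h₀c.1 (h ▸ hξ)
  have hn : 0 < ‖ξ‖ := norm_pos_iff.2 hξ0
  have hmem : ‖ξ‖⁻¹ • (ξ + η) ∈ Γ := by
    apply hδΓ
    rw [Metric.mem_thickening_iff]
    refine ⟨‖ξ‖⁻¹ • ξ, ⟨subset_closure (h₀c.2 ξ hξ _ (by positivity)), ?_⟩, ?_⟩
    · simp [norm_smul, hn.ne']
    · rw [dist_eq_norm, ← smul_sub, add_sub_cancel_left, norm_smul, norm_inv, norm_norm,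
        inv_mul_lt_iff₀ hn]
      calc ‖η‖ < _ := hη
        _ ≤ δ * ‖ξ‖ := by gcongr; exact min_le_left _ _
        _ = _ := mul_comm _ _
  have := hΓc.2 _ hmem ‖ξ‖ hn
  rwa [smul_smul, mul_inv_cancel₀ hn.ne', one_smul] at this

open FourierTransform in
lemma decay_fourier {t : ℝ} (ht : 0 < t) {f : EuclideanSpace ℝ (Fin d) → ℂ} {C k : ℝ}
    (hC : 0 < C) (hk : 0 < k)
    (η : EuclideanSpace ℝ (Fin d))
    (h : ‖FT f ((2 * Real.pi) • η)‖ ≤ C * Real.exp (-k * ‖(2 * Real.pi) • η‖ ^ t)) :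
    ‖𝓕 f η‖ ≤ C / (2 * Real.pi) ^ (-(d : ℝ) / 2) * Real.exp (-k * ‖η‖ ^ t) := by
  have hπ := Real.pi_gt_three
  have hc : 0 < (2 * Real.pi) ^ (-(d : ℝ) / 2) := by positivity
  rw [norm_FT_smul] at h
  rw [div_mul_eq_mul_div, le_div_iff₀ hc, mul_comm]
  refine h.trans ?_
  have : ‖η‖ ≤ ‖(2 * Real.pi) • η‖ := by
    rw [norm_smul, Real.norm_of_nonneg (by positivity)]
    nlinarith [norm_nonneg η]
  have := Real.rpow_le_rpow (norm_nonneg η) this ht.le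
  gcongr C * Real.exp ?_
  nlinarith

theorem stmt7 {d : ℕ} (s : ℝ) (hs : 1 < s)
    (u : EuclideanSpace ℝ (Fin d) → ℂ) (hu : Integrable u) (huc : HasCompactSupport u)
    (Γ₀ Γ : Set (EuclideanSpace ℝ (Fin d)))
    (h₀o : IsOpen Γ₀) (h₀c : IsCone Γ₀) (hΓo : IsOpen Γ) (hΓc : IsCone Γ)
    (hsub : closure Γ₀ \ {0} ⊆ Γ)
    (C k : ℝ) (hC : 0 < C) (hk : 0 < k)
    (hdec : ∀ ξ ∈ Γ, ‖FT u ξ‖ ≤ C * Real.exp (-k * ‖ξ‖ ^ (1 / s))) :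
    ∀ φ : EuclideanSpace ℝ (Fin d) → ℂ, IsSCutoff s φ →
      ∃ C' k' : ℝ, 0 < C' ∧ 0 < k' ∧
        ∀ ξ ∈ Γ₀, ‖FT (fun x => φ x * u x) ξ‖ ≤ C' * Real.exp (-k' * ‖ξ‖ ^ (1 / s)) := by
  intro φ hφ
  obtain ⟨hφs, hφc, hφd⟩ := hφ
  have ht : 0 < 1 / s := by positivity
  have ht1 : 1 / s ≤ 1 := by
    rw [div_le_one (by positivity)]; exact hs.le
  generalize 1 / s = t at *
  obtain ⟨δ, hδ, hδ2, hδΓ⟩ := cone_delta Γ₀ Γ h₀c hΓo hΓc hsub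
  obtain ⟨C₂, hC₂, hφd⟩ := hφd 2 two_pos
  have hπ := Real.pi_gt_three
  set c : ℝ := (2 * Real.pi) ^ (-(d : ℝ) / 2) with hcdef
  have hc : 0 < c := by positivity
  have bφ : ∀ η, ‖FourierTransform.fourier φ η‖ ≤ C₂ / c * Real.exp (-2 * ‖η‖ ^ t) := fun η =>
    decay_fourier ht hC₂ two_pos η (hφd _)
  have bu : ∀ η ∈ Γ, ‖FourierTransform.fourier u η‖ ≤ C / c * Real.exp (-k * ‖η‖ ^ t) := fun η hη =>
    decay_fourier ht hC hk η (hdec _ (hΓc.2 η hη _ (by positivity)))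
  have bu' : ∀ η, ‖FourierTransform.fourier u η‖ ≤ ∫ x, ‖u x‖ := fun η =>
    VectorFourier.norm_fourierIntegral_le_integral_norm _ _ _ _ _
  have hU : 0 ≤ ∫ x, ‖u x‖ := integral_nonneg fun _ => norm_nonneg _
  have hφcont : Continuous φ := hφs.continuous
  have hφint : Integrable φ := hφcont.integrable_of_hasCompactSupport hφc
  have hE := integrable_exp_neg_norm_rpow (d := d) ht ht1
  have hFc : Continuous (FourierTransform.fourier φ) := by
    apply VectorFourier.fourierIntegral_continuous Real.continuous_fourierChar _ hφint
    simpa using continuous_inner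
  have hφ' : Integrable (FourierTransform.fourier φ) := by
    refine (hE.const_mul (C₂ / c)).mono' hFc.aestronglyMeasurable
      (Filter.Eventually.of_forall fun η => (bφ η).trans ?_)
    have : 0 ≤ ‖η‖ ^ t := by positivity
    gcongr
    linarith
  set κ : ℝ := min (k * (1 / 2) ^ t) (δ ^ t) with hκ
  have hκ0 : 0 < κ := by positivity
  set M : ℝ := C / c + ∫ x, ‖u x‖ with hM
  have hM0 : 0 < M := by positivity
  set J : ℝ := ∫ η : EuclideanSpace ℝ (Fin d), Real.exp (-‖η‖ ^ t) with hJ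
  have hJ0 : 0 ≤ J := integral_nonneg fun _ => (Real.exp_pos _).le
  -- pointwise bound of the convolution integrand
  have point : ∀ ξ ∈ Γ₀, ∀ η, ‖FourierTransform.fourier φ (-η) * FourierTransform.fourier u (ξ + η)‖ ≤
      (C₂ / c * M * Real.exp (-κ * ‖ξ‖ ^ t)) * Real.exp (-‖η‖ ^ t) := by
    intro ξ hξ η
    have h1 := bφ (-η)
    rw [norm_neg] at h1
    have hη0 : 0 ≤ ‖η‖ ^ t := by positivity
    have hξ0 : 0 ≤ ‖ξ‖ ^ t := by positivity
    rw [norm_mul]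
    by_cases hη : ‖η‖ < δ * ‖ξ‖
    · have h2 := bu _ (hδΓ ξ hξ η hη)
      have h3 : 1 / 2 * ‖ξ‖ ≤ ‖ξ + η‖ := by
        have := norm_sub_le (ξ + η) η
        rw [add_sub_cancel_right] at this
        nlinarith [norm_nonneg ξ]
      have h4 := Real.rpow_le_rpow (by positivity) h3 ht.le
      rw [Real.mul_rpow (by norm_num) (norm_nonneg _)] at h4
      have h5 : κ * ‖ξ‖ ^ t ≤ k * ‖ξ + η‖ ^ t := by
        calc κ * ‖ξ‖ ^ t ≤ (k * (1 / 2) ^ t) * ‖ξ‖ ^ t := by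
              gcongr; exact min_le_left _ _
          _ = k * ((1 / 2) ^ t * ‖ξ‖ ^ t) := by ring
          _ ≤ _ := by gcongr
      calc ‖FourierTransform.fourier φ (-η)‖ * ‖FourierTransform.fourier u (ξ + η)‖
          ≤ (C₂ / c * Real.exp (-‖η‖ ^ t)) * (M * Real.exp (-κ * ‖ξ‖ ^ t)) := by
            gcongr
            · refine h1.trans ?_
              gcongr
              linarith
            · refine h2.trans ?_
              refine mul_le_mul ?_ (Real.exp_le_exp.2 (by linarith)) (Real.exp_pos _).le hM0.le
              rw [hM]; linarith
        _ = _ := by ring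
    · have h3 := Real.rpow_le_rpow (by positivity) (not_lt.1 hη) ht.le
      rw [Real.mul_rpow hδ.le (norm_nonneg _)] at h3
      have h5 : κ * ‖ξ‖ ^ t ≤ ‖η‖ ^ t := by
        refine le_trans ?_ h3
        gcongr; exact min_le_right _ _
      calc ‖FourierTransform.fourier φ (-η)‖ * ‖FourierTransform.fourier u (ξ + η)‖
          ≤ (C₂ / c * (Real.exp (-κ * ‖ξ‖ ^ t) * Real.exp (-‖η‖ ^ t))) * M := by
            gcongr
            · refine h1.trans ?_
              rw [← Real.exp_add]
              gcongr
              linarith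
            · refine (bu' _).trans ?_
              have : 0 < C / c := by positivity
              rw [hM]; linarith
        _ = _ := by ring
  have hfour : ∀ ξ ∈ Γ₀, ‖FourierTransform.fourier (fun x => φ x * u x) ξ‖ ≤
      (C₂ / c * M * Real.exp (-κ * ‖ξ‖ ^ t)) * J := by
    intro ξ hξ
    rw [fourier_mul_eq φ u hφcont hφint hφ' hu, hJ, ← integral_const_mul]
    exact norm_integral_le_of_norm_le (hE.const_mul _)
      (Filter.Eventually.of_forall (point ξ hξ))
  refine ⟨c * (C₂ / c * M) * (J + 1), κ * ((2 * Real.pi)⁻¹) ^ t, by positivity, by positivity,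
    fun ξ hξ => ?_⟩
  have h := hfour _ (h₀c.2 ξ hξ (2 * Real.pi)⁻¹ (by positivity))
  rw [FT_eq, norm_mul, Complex.norm_real, Real.norm_of_nonneg hc.le]
  rw [norm_smul, Real.norm_of_nonneg (by positivity), Real.mul_rpow (by positivity)
    (norm_nonneg _)] at h
  calc c * _ ≤ c * _ := mul_le_mul_of_nonneg_left h hc.le
    _ = c * (C₂ / c * M) * J * Real.exp (-κ * ((2 * Real.pi)⁻¹ ^ t * ‖ξ‖ ^ t)) := by ring
    _ ≤ c * (C₂ / c * M) * (J + 1) * Real.exp (-κ * ((2 * Real.pi)⁻¹ ^ t * ‖ξ‖ ^ t)) := by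
      gcongr
      linarith
    _ = _ := by
      congr 2
      ring

end Paper
end
end

section
/- Let s > 1, p, q ∈ [1,∞], let ω be an s-admissible weight on ℝ^d, let g be a nonzero s-cutoff, and let f ∈ L¹(ℝ^d) have compact support. Then WF_{M^{p,q}_ω}(f) = WF_{FL^q_ω}(f); in particular WF_{M^{p,q}_ω}(f) does not depend on p nor on the window g. -/
open MeasureTheory Complex Set
open scoped ENNReal RealInnerProductSpace NNReal

noncomputable section

namespace Paper

variable {d : ℕ}

/-- normalization constant -/
def cst (d : ℕ) : ℝ := (2 * Real.pi) ^ (-(d : ℝ) / 2)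

lemma cst_pos (d : ℕ) : 0 < cst d := by unfold cst; positivity

lemma cst_sq (d : ℕ) : cst d * cst d * (2 * Real.pi) ^ d = 1 := by
  unfold cst
  have h : (0 : ℝ) < 2 * Real.pi := by positivity
  rw [← Real.rpow_add h, ← Real.rpow_natCast, ← Real.rpow_add h]
  convert Real.rpow_zero _ using 2
  ring

lemma norm_expI (r : ℝ) : ‖Complex.exp (-(r : ℂ) * Complex.I)‖ = 1 := by
  rw [← ofReal_neg, norm_exp_ofReal_mul_I]

lemma FT_def' (f : EuclideanSpace ℝ (Fin d) → ℂ) (ξ : EuclideanSpace ℝ (Fin d)) :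
    FT f ξ = (cst d : ℂ) * ∫ x, f x * Complex.exp (-(⟪x, ξ⟫ : ℝ) * Complex.I) := rfl

lemma norm_FT_le (f : EuclideanSpace ℝ (Fin d) → ℂ) (ξ : EuclideanSpace ℝ (Fin d)) :
    ‖FT f ξ‖ ≤ cst d * ∫ x, ‖f x‖ := by
  rw [FT_def', norm_mul, norm_real, Real.norm_of_nonneg (cst_pos d).le]
  refine mul_le_mul_of_nonneg_left ?_ (cst_pos d).le
  refine (norm_integral_le_integral_norm _).trans (le_of_eq ?_)
  simp only [norm_mul, norm_expI, mul_one]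

lemma continuous_FT {f : EuclideanSpace ℝ (Fin d) → ℂ} (hf : Integrable f) :
    Continuous (FT f) := by
  have : FT f = fun ξ => (cst d : ℂ) * ∫ x, f x * Complex.exp (-(⟪x, ξ⟫ : ℝ) * Complex.I) := rfl
  rw [this]
  refine continuous_const.mul ?_
  refine continuous_of_dominated (bound := fun x => ‖f x‖) ?_ ?_ hf.norm ?_
  · intro ξ
    refine hf.aestronglyMeasurable.mul (Continuous.aestronglyMeasurable ?_)
    fun_prop
  · intro ξ
    refine Filter.Eventually.of_forall fun x => ?_
    simp only [norm_mul, norm_expI, mul_one, le_refl]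
  · refine Filter.Eventually.of_forall fun x => ?_
    fun_prop

open scoped FourierTransform in
lemma FT_eq_fourier (f : EuclideanSpace ℝ (Fin d) → ℂ) (ξ : EuclideanSpace ℝ (Fin d)) :
    FT f ξ = (cst d : ℂ) * 𝓕 f ((2 * Real.pi)⁻¹ • ξ) := by
  rw [FT_def', Real.fourier_eq']
  congr 1
  refine integral_congr_ae (Filter.Eventually.of_forall fun x => ?_)
  simp only [smul_eq_mul, inner_smul_right]
  rw [mul_comm]
  congr 3
  have : (Real.pi : ℂ) ≠ 0 := by exact_mod_cast Real.pi_ne_zero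
  push_cast
  field_simp

open scoped FourierTransform in
lemma FT_inv {h : EuclideanSpace ℝ (Fin d) → ℂ} (hc : Continuous h) (hi : Integrable h)
    (hF : Integrable (FT h)) (y : EuclideanSpace ℝ (Fin d)) :
    h y = (cst d : ℂ) * ∫ η, FT h η * Complex.exp ((⟪y, η⟫ : ℝ) * Complex.I) := by
  have hpi : (2 * Real.pi : ℝ) ≠ 0 := by positivity
  have hc0 : (cst d : ℂ) ≠ 0 := by exact_mod_cast (cst_pos d).ne'
  have e : 𝓕 h = fun w => (cst d : ℂ)⁻¹ * FT h ((2 * Real.pi) • w) := by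
    funext w
    rw [FT_eq_fourier, smul_smul, inv_mul_cancel₀ hpi, one_smul, inv_mul_cancel_left₀ hc0]
  have hF' : Integrable (𝓕 h) := by
    rw [e]
    exact (hF.comp_smul hpi).const_mul _
  have := congrFun (hc.fourierInv_fourier_eq hi hF') y
  rw [← this, Real.fourierInv_eq', e]
  have e2 := Measure.integral_comp_smul (volume : Measure (EuclideanSpace ℝ (Fin d)))
    (fun η => FT h η * Complex.exp ((⟪y, η⟫ : ℝ) * Complex.I)) (2 * Real.pi)
  have e3 : ∀ v : EuclideanSpace ℝ (Fin d),
      Complex.exp (((2 * Real.pi * ⟪v, y⟫ : ℝ) : ℂ) * Complex.I) •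
        ((cst d : ℂ)⁻¹ * FT h ((2 * Real.pi) • v)) =
      (cst d : ℂ)⁻¹ * (FT h ((2 * Real.pi) • v) *
        Complex.exp ((⟪y, (2 * Real.pi) • v⟫ : ℝ) * Complex.I)) := by
    intro v
    rw [inner_smul_right, real_inner_comm, smul_eq_mul]
    ring
  simp_rw [e3]
  rw [integral_const_mul, e2, finrank_euclideanSpace_fin, abs_of_pos (by positivity),
    real_smul, ← mul_assoc]
  congr 1
  have h1 := cst_sq d
  have h2 : (cst d : ℂ) * cst d * ((2 * Real.pi) ^ d : ℝ) = 1 := by exact_mod_cast h1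
  have h3 : (((2 * Real.pi) ^ d : ℝ) : ℂ) ≠ 0 := by exact_mod_cast (pow_ne_zero d hpi)
  rw [ofReal_inv, ← mul_inv]
  exact inv_eq_of_mul_eq_one_right (by linear_combination h2)

/-- convolution formula -/
lemma FT_mul {F h : EuclideanSpace ℝ (Fin d) → ℂ} (hFi : Integrable F) (hc : Continuous h)
    (hi : Integrable h) (hF : Integrable (FT h)) (ξ : EuclideanSpace ℝ (Fin d)) :
    FT (fun y => F y * h y) ξ = (cst d : ℂ) * ∫ η, FT h η * FT F (ξ - η) := by
  rw [FT_def']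
  congr 1
  have e1 : ∀ y, F y * h y * Complex.exp (-(⟪y, ξ⟫ : ℝ) * Complex.I) =
      ∫ η, (cst d : ℂ) * (FT h η * (F y * Complex.exp (-(⟪y, ξ - η⟫ : ℝ) * Complex.I))) := by
    intro y
    rw [integral_const_mul]
    conv_lhs => rw [FT_inv hc hi hF y]
    rw [mul_comm (F y), mul_assoc, mul_assoc, ← integral_mul_const]
    congr 1
    refine integral_congr_ae (Filter.Eventually.of_forall fun η => ?_)
    simp only []
    rw [inner_sub_right]
    have : Complex.exp (-((⟪y, ξ⟫ - ⟪y, η⟫ : ℝ) : ℂ) * Complex.I) =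
      Complex.exp ((⟪y, η⟫ : ℝ) * Complex.I) * Complex.exp (-(⟪y, ξ⟫ : ℝ) * Complex.I) := by
      rw [← Complex.exp_add]; congr 1; push_cast; ring
    rw [this]; ring
  simp_rw [e1]
  rw [integral_integral_swap]
  · refine integral_congr_ae (Filter.Eventually.of_forall fun η => ?_)
    simp only [integral_const_mul]
    rw [FT_def' F]; ring
  · have hb : Integrable (fun z : EuclideanSpace ℝ (Fin d) × EuclideanSpace ℝ (Fin d) =>
        F z.1 * FT h z.2) (volume.prod volume) := hFi.mul_prod hF
    have : Integrable (fun z : EuclideanSpace ℝ (Fin d) × EuclideanSpace ℝ (Fin d) =>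
        (cst d : ℂ) * (F z.1 * FT h z.2) *
          Complex.exp (-(⟪z.1, ξ - z.2⟫ : ℝ) * Complex.I)) (volume.prod volume) := by
      refine (hb.const_mul (cst d : ℂ)).mul_bdd (c := 1)
        (Continuous.aestronglyMeasurable (by fun_prop)) ?_
      exact Filter.Eventually.of_forall fun z => (norm_expI _).le
    refine this.congr (Filter.Eventually.of_forall fun z => ?_)
    simp only [Function.uncurry]
    ring

lemma enorm_FT_mul_le {F h : EuclideanSpace ℝ (Fin d) → ℂ} (hFi : Integrable F)
    (hc : Continuous h)
    (hi : Integrable h) (hF : Integrable (FT h)) (ξ : EuclideanSpace ℝ (Fin d)) :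
    ‖FT (fun y => F y * h y) ξ‖ₑ ≤
      ENNReal.ofReal (cst d) * ∫⁻ η, ‖FT h η‖ₑ * ‖FT F (ξ - η)‖ₑ := by
  rw [FT_mul hFi hc hi hF, enorm_mul]
  refine mul_le_mul' (le_of_eq ?_) ?_
  · rw [← ofReal_norm, norm_real, Real.norm_of_nonneg (cst_pos d).le]
  · refine (enorm_integral_le_lintegral_enorm _).trans (le_of_eq ?_)
    simp only [enorm_mul]

lemma rpow_sub_add {s : ℝ} (hs : 1 < s) (x y : EuclideanSpace ℝ (Fin d)) :
    ‖x + y‖ ^ (1 / s) ≤ ‖x‖ ^ (1 / s) + ‖y‖ ^ (1 / s) := by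
  have h0 : 0 ≤ 1 / s := by positivity
  have h1 : 1 / s ≤ 1 := by rw [div_le_one (by linarith)]; exact hs.le
  exact (Real.rpow_le_rpow (norm_nonneg _) (norm_add_le x y) h0).trans
    (Real.rpow_add_le_add_rpow (norm_nonneg _) (norm_nonneg _) h0 h1)

lemma continuous_expw {s : ℝ} (hs : 1 < s) (k : ℝ) :
    Continuous (fun η : EuclideanSpace ℝ (Fin d) => Real.exp (-k * ‖η‖ ^ (1 / s))) := by
  have h0 : 0 ≤ 1 / s := by positivity
  exact Real.continuous_exp.comp (continuous_const.mul
    (continuous_norm.rpow_const fun _ => Or.inr h0))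

lemma integrable_expw {s : ℝ} (hs : 1 < s) {k : ℝ} (hk : 0 < k) :
    Integrable (fun η : EuclideanSpace ℝ (Fin d) => Real.exp (-k * ‖η‖ ^ (1 / s))) := by
  have hs0 : 0 < s := by linarith
  have h0 : 0 ≤ 1 / s := by positivity
  have h1 : 1 / s ≤ 1 := by rw [div_le_one (by linarith)]; exact hs.le
  set r : ℝ := d + 1 with hr
  set n : ℕ := ⌈s * r⌉₊ with hn
  have hInt : Integrable (fun η : EuclideanSpace ℝ (Fin d) => (1 + ‖η‖) ^ (-r)) := by
    apply integrable_one_add_norm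
    rw [finrank_euclideanSpace_fin, hr]; linarith
  set C : ℝ := n.factorial * Real.exp k / k ^ n with hC
  refine (hInt.const_mul C).mono' (continuous_expw hs k).aestronglyMeasurable ?_
  refine Filter.Eventually.of_forall fun η => ?_
  rw [Real.norm_of_nonneg (Real.exp_pos _).le]
  set t := ‖η‖ with ht
  have ht0 : 0 ≤ t := norm_nonneg _
  set x := t ^ (1 / s) with hx
  have hx0 : 0 ≤ x := by positivity
  have a1 : (1 + t) ^ r ≤ (1 + x) ^ n := by
    have b1 : (1 + t) ^ (1 / s) ≤ 1 + x := by
      have := Real.rpow_add_le_add_rpow (zero_le_one) ht0 h0 h1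
      rwa [Real.one_rpow] at this
    have b2 : (1 + t) ^ r = ((1 + t) ^ (1 / s)) ^ (s * r) := by
      rw [← Real.rpow_mul (by linarith)]
      congr 1
      field_simp
    rw [b2]
    refine (Real.rpow_le_rpow (by positivity) b1 (by positivity)).trans ?_
    rw [← Real.rpow_natCast]
    exact Real.rpow_le_rpow_of_exponent_le (by linarith) (Nat.le_ceil _)
  have a2 : (1 + x) ^ n ≤ C * Real.exp (k * x) := by
    have := Real.pow_div_factorial_le_exp (k * (1 + x)) (by positivity) n
    rw [div_le_iff₀ (by positivity), mul_pow, mul_add, mul_one, Real.exp_add] at this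
    rw [hC, div_mul_eq_mul_div, le_div_iff₀ (by positivity)]
    linarith
  rw [Real.rpow_neg (by linarith), ← div_eq_mul_inv, le_div_iff₀ (by positivity), neg_mul,
    Real.exp_neg, inv_mul_le_iff₀ (by positivity)]
  linarith

lemma lintegral_expw {s : ℝ} (hs : 1 < s) {k : ℝ} (hk : 0 < k) :
    ∫⁻ η : EuclideanSpace ℝ (Fin d), ENNReal.ofReal (Real.exp (-k * ‖η‖ ^ (1 / s))) < ∞ :=
  (integrable_expw hs hk).lintegral_lt_top

lemma eLpNorm_lt_top_of_le_one {a : EuclideanSpace ℝ (Fin d) → ℝ≥0∞} (h1 : ∀ x, a x ≤ 1)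
    (hi : ∫⁻ x, a x < ∞) {q : ℝ≥0∞} (hq : 1 ≤ q) : eLpNorm a q volume < ∞ := by
  have hq0 : q ≠ 0 := (zero_lt_one.trans_le hq).ne'
  by_cases hqt : q = ∞
  · subst hqt
    rw [eLpNorm_exponent_top, eLpNormEssSup]
    refine lt_of_le_of_lt (essSup_le_of_ae_le 1 (Filter.Eventually.of_forall fun x => ?_))
      ENNReal.one_lt_top
    exact h1 x
  · rw [eLpNorm_lt_top_iff_lintegral_rpow_enorm_lt_top hq0 hqt]
    refine lt_of_le_of_lt (lintegral_mono fun x => ?_) hi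
    have hr : 1 ≤ q.toReal := by
      rw [← ENNReal.toReal_one]; exact ENNReal.toReal_mono hqt hq
    simp only [enorm_eq_self]
    exact ENNReal.rpow_le_self_of_le_one (h1 x) hr

/-- Young's inequality, qualitative -/
lemma young {a b : EuclideanSpace ℝ (Fin d) → ℝ≥0∞} (ha : Measurable a) (hb : Measurable b)
    {q : ℝ≥0∞} (hq : 1 ≤ q) (haq : eLpNorm a q volume < ∞) (hbi : ∫⁻ x, b x < ∞) :
    eLpNorm (fun ξ => ∫⁻ η, b η * a (ξ - η)) q volume < ∞ := by
  have hq0 : q ≠ 0 := (zero_lt_one.trans_le hq).ne'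
  by_cases hqt : q = ∞
  · subst hqt
    rw [eLpNorm_exponent_top, eLpNormEssSup] at *
    simp only [enorm_eq_self] at *
    refine lt_of_le_of_lt (essSup_le_of_ae_le ((∫⁻ x, b x) * essSup a volume)
      (Filter.Eventually.of_forall fun ξ => ?_)) (ENNReal.mul_lt_top hbi haq)
    simp only []
    rw [← lintegral_mul_const _ hb]
    refine lintegral_mono_ae ?_
    have h1 : ∀ᵐ x, a x ≤ essSup a volume := ENNReal.ae_le_essSup a
    have h2 := (Measure.measurePreserving_sub_left (volume : Measure (EuclideanSpace ℝ (Fin d)))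
      ξ).quasiMeasurePreserving.ae h1
    filter_upwards [h2] with η hη
    exact mul_le_mul_right hη _
  · have hr : 1 ≤ q.toReal := by
      rw [← ENNReal.toReal_one]; exact ENNReal.toReal_mono hqt hq
    rw [eLpNorm_lt_top_iff_lintegral_rpow_enorm_lt_top hq0 hqt] at *
    simp only [enorm_eq_self] at *
    set r := q.toReal with hrdef
    have hr0 : 0 < r := by linarith
    set B := ∫⁻ x, b x with hB
    have key : ∀ ξ, (∫⁻ η, b η * a (ξ - η)) ^ r ≤
        (∫⁻ η, b η * a (ξ - η) ^ r) * (B ^ (1 - 1 / r)) ^ r := by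
      intro ξ
      have hm : Measurable fun η => a (ξ - η) := ha.comp (measurable_const.sub measurable_id)
      have := eLpNorm'_le_eLpNorm'_mul_rpow_measure_univ (μ := volume.withDensity b)
        (f := fun η => a (ξ - η)) zero_lt_one hr hm.aestronglyMeasurable
      simp only [eLpNorm', enorm_eq_self, ENNReal.rpow_one, div_one] at this
      rw [lintegral_withDensity_eq_lintegral_mul _ hb hm,
        lintegral_withDensity_eq_lintegral_mul _ hb (hm.pow_const r),
        withDensity_apply _ MeasurableSet.univ, Measure.restrict_univ] at this
      have h3 := ENNReal.rpow_le_rpow this hr0.le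
      rw [ENNReal.mul_rpow_of_nonneg _ _ hr0.le, ← ENNReal.rpow_mul, one_div_mul_cancel hr0.ne',
        ENNReal.rpow_one] at h3
      exact h3
    have hBt : (B ^ (1 - 1 / r)) ^ r < ∞ := by
      refine ENNReal.rpow_lt_top_of_nonneg hr0.le (ENNReal.rpow_lt_top_of_nonneg ?_ hbi.ne).ne
      rw [sub_nonneg, div_le_one hr0]; exact hr
    refine lt_of_le_of_lt (lintegral_mono key) ?_
    have hm2 : Measurable fun z : EuclideanSpace ℝ (Fin d) × EuclideanSpace ℝ (Fin d) =>
        b z.2 * a (z.1 - z.2) ^ r :=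
      (hb.comp measurable_snd).mul ((ha.comp (measurable_fst.sub measurable_snd)).pow_const r)
    rw [lintegral_mul_const _ hm2.lintegral_prod_right']
    refine ENNReal.mul_lt_top ?_ hBt
    rw [lintegral_lintegral_swap hm2.aemeasurable]
    have : ∀ η, ∫⁻ ξ, b η * a (ξ - η) ^ r = b η * ∫⁻ x, a x ^ r := by
      intro η
      rw [lintegral_const_mul]
      · rw [lintegral_sub_right_eq_self (fun x => a x ^ r)]
      · exact (ha.comp (measurable_id.sub measurable_const)).pow_const r
    simp_rw [this]
    rw [lintegral_mul_const _ hb]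
    exact ENNReal.mul_lt_top hbi haq

lemma IsSCutoff.integrable {s : ℝ} {φ : EuclideanSpace ℝ (Fin d) → ℂ} (h : IsSCutoff s φ) :
    Integrable φ := h.1.continuous.integrable_of_hasCompactSupport h.2.1

lemma IsSCutoff.integrable_FT {s : ℝ} (hs : 1 < s) {φ : EuclideanSpace ℝ (Fin d) → ℂ}
    (h : IsSCutoff s φ) : Integrable (FT φ) := by
  obtain ⟨C, hC, hb⟩ := h.2.2 1 one_pos
  exact ((integrable_expw hs one_pos).const_mul C).mono'
    (continuous_FT h.integrable).aestronglyMeasurable (Filter.Eventually.of_forall hb)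

lemma IsSCutoff.bounded {s : ℝ} {φ : EuclideanSpace ℝ (Fin d) → ℂ} (h : IsSCutoff s φ) :
    ∃ C, ∀ x, ‖φ x‖ ≤ C := h.2.1.exists_bound_of_continuous h.1.continuous

lemma IsSCutoff.mul_integrable {s : ℝ} {φ f : EuclideanSpace ℝ (Fin d) → ℂ} (h : IsSCutoff s φ)
    (hf : Integrable f) : Integrable (fun x => φ x * f x) := by
  obtain ⟨C, hC⟩ := h.bounded
  exact hf.bdd_mul h.1.continuous.aestronglyMeasurable (Filter.Eventually.of_forall hC)

lemma IsSCutoff.mul {s : ℝ} (hs : 1 < s) {φ ψ : EuclideanSpace ℝ (Fin d) → ℂ}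
    (hφ : IsSCutoff s φ) (hψ : IsSCutoff s ψ) : IsSCutoff s (fun x => φ x * ψ x) := by
  refine ⟨hφ.1.mul hψ.1, hφ.2.1.mul_right, fun N hN => ?_⟩
  obtain ⟨C₁, hC₁, h1⟩ := hφ.2.2 N hN
  obtain ⟨C₂, hC₂, h2⟩ := hψ.2.2 (N + 1) (by linarith)
  have hI := (integrable_expw (d := d) hs one_pos)
  set J := ∫ η : EuclideanSpace ℝ (Fin d), Real.exp (-1 * ‖η‖ ^ (1 / s)) with hJ
  have hJ0 : 0 ≤ J := integral_nonneg fun _ => (Real.exp_pos _).le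
  refine ⟨cst d * (C₁ * C₂ * J) + 1, by have := cst_pos d; positivity, fun ξ => ?_⟩
  rw [FT_mul hφ.integrable hψ.1.continuous hψ.integrable (hψ.integrable_FT hs), norm_mul,
    norm_real, Real.norm_of_nonneg (cst_pos d).le]
  have : ‖∫ η, FT ψ η * FT φ (ξ - η)‖ ≤ ∫ η : EuclideanSpace ℝ (Fin d),
      C₁ * C₂ * Real.exp (-N * ‖ξ‖ ^ (1 / s)) * Real.exp (-1 * ‖η‖ ^ (1 / s)) := by
    refine norm_integral_le_of_norm_le (hI.const_mul _) (Filter.Eventually.of_forall fun η => ?_)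
    rw [norm_mul]
    refine (mul_le_mul (h2 η) (h1 (ξ - η)) (norm_nonneg _) (by positivity)).trans ?_
    have e : ‖ξ‖ ^ (1 / s) ≤ ‖ξ - η‖ ^ (1 / s) + ‖η‖ ^ (1 / s) := by
      simpa using rpow_sub_add hs (ξ - η) η
    have e2 : Real.exp (-(N + 1) * ‖η‖ ^ (1 / s)) * Real.exp (-N * ‖ξ - η‖ ^ (1 / s)) ≤
        Real.exp (-N * ‖ξ‖ ^ (1 / s)) * Real.exp (-1 * ‖η‖ ^ (1 / s)) := by
      rw [← Real.exp_add, ← Real.exp_add]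
      refine Real.exp_le_exp.2 ?_
      nlinarith
    calc _ = C₁ * C₂ * (Real.exp (-(N + 1) * ‖η‖ ^ (1 / s)) *
          Real.exp (-N * ‖ξ - η‖ ^ (1 / s))) := by ring
      _ ≤ C₁ * C₂ * (Real.exp (-N * ‖ξ‖ ^ (1 / s)) * Real.exp (-1 * ‖η‖ ^ (1 / s))) := by
          gcongr
      _ = _ := by ring
  rw [integral_const_mul] at this
  have h3 := mul_le_mul_of_nonneg_left this (cst_pos d).le
  refine h3.trans ?_
  have := Real.exp_pos (-N * ‖ξ‖ ^ (1 / s))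
  rw [← hJ]
  nlinarith

/-- the shifted conjugated window -/
def sh (g : EuclideanSpace ℝ (Fin d) → ℂ) (x y : EuclideanSpace ℝ (Fin d)) : ℂ :=
  (starRingEnd ℂ) (g (y - x))

lemma norm_FT_sh (g : EuclideanSpace ℝ (Fin d) → ℂ) (x ξ : EuclideanSpace ℝ (Fin d)) :
    ‖FT (sh g x) ξ‖ = ‖FT g (-ξ)‖ := by
  have e : ∫ y, sh g x y * Complex.exp (-(⟪y, ξ⟫ : ℝ) * Complex.I) =
      Complex.exp (-(⟪x, ξ⟫ : ℝ) * Complex.I) *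
      (starRingEnd ℂ) (∫ y, g y * Complex.exp (-(⟪y, -ξ⟫ : ℝ) * Complex.I)) := by
    rw [← integral_conj, ← integral_const_mul,
      ← integral_sub_right_eq_self (fun y => Complex.exp (-(⟪x, ξ⟫ : ℝ) * Complex.I) *
        (starRingEnd ℂ) (g y * Complex.exp (-(⟪y, -ξ⟫ : ℝ) * Complex.I))) x]
    refine integral_congr_ae (Filter.Eventually.of_forall fun y => ?_)
    simp only [sh, map_mul, ← Complex.exp_conj, map_neg, conj_ofReal, conj_I]
    rw [mul_left_comm, ← Complex.exp_add, inner_sub_left, inner_neg_right, inner_neg_right]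
    congr 2
    push_cast
    ring
  rw [FT_def', FT_def', e, norm_mul, norm_mul, norm_expI, RCLike.norm_conj, one_mul, norm_mul]

lemma STFT_eq (g F : EuclideanSpace ℝ (Fin d) → ℂ) (x ξ : EuclideanSpace ℝ (Fin d)) :
    STFT g F x ξ = FT (fun y => F y * sh g x y) ξ := by
  simp only [STFT, FT, sh]
  simp_rw [real_inner_comm ξ]

lemma IsSCutoff.sh {s : ℝ} {g : EuclideanSpace ℝ (Fin d) → ℂ} (hg : IsSCutoff s g)
    (x : EuclideanSpace ℝ (Fin d)) : IsSCutoff s (sh g x) := by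
  refine ⟨?_, ?_, fun N hN => ?_⟩
  · have : ContDiff ℝ (⊤ : ℕ∞) fun y => g (y - x) := hg.1.comp (contDiff_id.sub contDiff_const)
    exact Complex.conjCLE.contDiff.comp this
  · have : HasCompactSupport fun y => g (y - x) := by
      have := hg.2.1.comp_homeomorph (Homeomorph.subRight x)
      exact this
    exact this.comp_left (map_zero _)
  · obtain ⟨C, hC, h⟩ := hg.2.2 N hN
    refine ⟨C, hC, fun ξ => ?_⟩
    rw [norm_FT_sh, ← norm_neg ξ]
    exact h _

lemma ModSemi_eq (g F : EuclideanSpace ℝ (Fin d) → ℂ) (ω : EuclideanSpace ℝ (Fin d) → ℝ)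
    (p q : ℝ≥0∞) (hq : 1 ≤ q) (Γ : Set (EuclideanSpace ℝ (Fin d))) :
    ModSemi g F ω p q Γ =
      eLpNorm (fun ξ => eLpNorm (fun x => STFT g F x ξ) p volume * ENNReal.ofReal (ω ξ)) q
        (volume.restrict Γ) := by
  have hq0 : q ≠ 0 := (zero_lt_one.trans_le hq).ne'
  simp only [ModSemi, eLpNorm, eLpNorm', eLpNormEssSup, hq0, if_false, enorm_eq_self]

lemma enorm_FLint (f : EuclideanSpace ℝ (Fin d) → ℂ) (ω : EuclideanSpace ℝ (Fin d) → ℝ)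
    (hω : ∀ x, 0 < ω x) (ξ : EuclideanSpace ℝ (Fin d)) :
    ‖‖FT f ξ‖ * ω ξ‖ₑ = ‖FT f ξ‖ₑ * ENNReal.ofReal (ω ξ) := by
  rw [enorm_mul, enorm_norm, Real.enorm_of_nonneg (hω ξ).le]

lemma FLSemi_eq (f : EuclideanSpace ℝ (Fin d) → ℂ) (ω : EuclideanSpace ℝ (Fin d) → ℝ)
    (hω : ∀ x, 0 < ω x) (q : ℝ≥0∞) (Γ : Set (EuclideanSpace ℝ (Fin d))) :
    FLSemi ω q f Γ = eLpNorm (fun ξ => ‖FT f ξ‖ₑ * ENNReal.ofReal (ω ξ)) q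
        (volume.restrict Γ) := by
  unfold FLSemi
  refine le_antisymm (eLpNorm_mono_enorm fun ξ => ?_) (eLpNorm_mono_enorm fun ξ => ?_) <;>
  rw [enorm_FLint f ω hω, enorm_eq_self]

lemma FT_fub {χ g F : EuclideanSpace ℝ (Fin d) → ℂ}
    (h : Integrable (fun z : EuclideanSpace ℝ (Fin d) × EuclideanSpace ℝ (Fin d) =>
      χ z.1 * (F z.2 * sh g z.1 z.2)) (volume.prod volume)) (ξ : EuclideanSpace ℝ (Fin d)) :
    FT (fun y => F y * ∫ x, χ x * sh g x y) ξ = ∫ x, χ x * FT (fun y => F y * sh g x y) ξ := by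
  have e : ∀ x, χ x * FT (fun y => F y * sh g x y) ξ =
      (cst d : ℂ) * ∫ y, χ x * (F y * sh g x y) * Complex.exp (-(⟪y, ξ⟫ : ℝ) * Complex.I) := by
    intro x
    simp_rw [FT_def', mul_assoc (χ x)]
    rw [integral_const_mul]
    ring
  simp_rw [e]
  rw [integral_const_mul, FT_def', integral_integral_swap]
  · congr 1
    refine integral_congr_ae (Filter.Eventually.of_forall fun y => ?_)
    simp only []
    rw [integral_mul_const, ← integral_const_mul]
    congr 2
    funext x
    ring
  · refine h.mul_bdd (c := 1) (Continuous.aestronglyMeasurable (by fun_prop)) ?_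
    exact Filter.Eventually.of_forall fun z => (norm_expI _).le

lemma integrable_fub {χ g F : EuclideanSpace ℝ (Fin d) → ℂ} (hχ : Integrable χ)
    (hF : Integrable F) (hg : Continuous g) {C : ℝ} (hC : ∀ x, ‖g x‖ ≤ C) :
    Integrable (fun z : EuclideanSpace ℝ (Fin d) × EuclideanSpace ℝ (Fin d) =>
      χ z.1 * (F z.2 * sh g z.1 z.2)) (volume.prod volume) := by
  have h1 := hχ.mul_prod hF
  have h2 : Continuous fun z : EuclideanSpace ℝ (Fin d) × EuclideanSpace ℝ (Fin d) =>
      sh g z.1 z.2 := by unfold sh; fun_prop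
  have := h1.mul_bdd (c := C) h2.aestronglyMeasurable
    (Filter.Eventually.of_forall fun z => by simp only [sh, RCLike.norm_conj]; exact hC _)
  refine this.congr (Filter.Eventually.of_forall fun z => ?_)
  simp only []
  ring

lemma continuous_STFT_fst {g F : EuclideanSpace ℝ (Fin d) → ℂ}
    (hF : Integrable F) (hg : Continuous g) {C : ℝ} (hC : ∀ x, ‖g x‖ ≤ C)
    (ξ : EuclideanSpace ℝ (Fin d)) : Continuous fun x => STFT g F x ξ := by
  unfold STFT
  refine continuous_const.mul ?_
  refine continuous_of_dominated (bound := fun y => ‖F y‖ * C) ?_ ?_ (hF.norm.mul_const C) ?_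
  · intro x
    refine (hF.aestronglyMeasurable.mul (Continuous.aestronglyMeasurable ?_)).mul
      (Continuous.aestronglyMeasurable ?_) <;> fun_prop
  · intro x
    refine Filter.Eventually.of_forall fun y => ?_
    rw [norm_mul, norm_expI, mul_one, norm_mul, RCLike.norm_conj]
    exact mul_le_mul_of_nonneg_left (hC _) (norm_nonneg _)
  · refine Filter.Eventually.of_forall fun y => ?_
    fun_prop

lemma isSCutoff_conv {s : ℝ} {χ g : EuclideanSpace ℝ (Fin d) → ℂ}
    (hχ : Continuous χ) (hχc : HasCompactSupport χ) (hg : IsSCutoff s g) :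
    IsSCutoff s (fun y => ∫ x, χ x * sh g x y) := by
  have hχi : Integrable χ := hχ.integrable_of_hasCompactSupport hχc
  have h0 : IsSCutoff s (sh g 0) := hg.sh 0
  have ec : (fun y => ∫ x, χ x * sh g x y) =
      convolution χ (sh g 0) (ContinuousLinearMap.mul ℝ ℂ) volume := by
    funext y
    rw [convolution_def]
    simp [sh]
  refine ⟨?_, ?_, fun N hN => ?_⟩
  · rw [ec]
    exact h0.2.1.contDiff_convolution_right _ hχi.locallyIntegrable h0.1
  · rw [ec]
    exact hχc.convolution _ h0.2.1
  · obtain ⟨C, hC, h⟩ := hg.2.2 N hN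
    have hInt : Integrable (fun z : EuclideanSpace ℝ (Fin d) × EuclideanSpace ℝ (Fin d) =>
        χ z.1 * (1 * sh g z.1 z.2)) (volume.prod volume) := by
      have := (hχi.convolution_integrand (ContinuousLinearMap.mul ℝ ℂ) h0.integrable
        (μ := volume)).swap
      refine this.congr (Filter.Eventually.of_forall fun z => ?_)
      simp [sh]
    have hI : 0 ≤ ∫ x, ‖χ x‖ := integral_nonneg fun _ => norm_nonneg _
    refine ⟨(∫ x, ‖χ x‖) * C + 1, by positivity, fun ξ => ?_⟩
    have e := FT_fub (F := fun _ => 1) hInt ξ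
    simp only [one_mul] at e
    rw [e]
    have : ‖∫ x, χ x * FT (fun y => sh g x y) ξ‖ ≤
        ∫ x, ‖χ x‖ * (C * Real.exp (-N * ‖ξ‖ ^ (1 / s))) := by
      refine norm_integral_le_of_norm_le (hχi.norm.mul_const _)
        (Filter.Eventually.of_forall fun x => ?_)
      rw [norm_mul]
      refine mul_le_mul_of_nonneg_left ?_ (norm_nonneg _)
      have := h (-ξ)
      rw [norm_neg] at this
      exact (norm_FT_sh g x ξ).le.trans this
    rw [integral_mul_const] at this
    have h3 := Real.exp_pos (-N * ‖ξ‖ ^ (1 / s))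
    nlinarith

lemma dir2 {s : ℝ} (hs : 1 < s) {p q : ℝ≥0∞} (hp : 1 ≤ p) (hq : 1 ≤ q)
    {ω : EuclideanSpace ℝ (Fin d) → ℝ} (hω : ∀ x, 0 < ω x)
    {g : EuclideanSpace ℝ (Fin d) → ℂ} (hg : IsSCutoff s g) (hg0 : g ≠ 0)
    {f : EuclideanSpace ℝ (Fin d) → ℂ} (hf : Integrable f)
    {x₀ : EuclideanSpace ℝ (Fin d)} {φ : EuclideanSpace ℝ (Fin d) → ℂ} (hφ : IsSCutoff s φ)
    (hφ0 : φ x₀ ≠ 0) {Γ : Set (EuclideanSpace ℝ (Fin d))}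
    (hfin : ModSemi g (fun x => φ x * f x) ω p q Γ < ∞) :
    ∃ φ', IsSCutoff s φ' ∧ φ' x₀ ≠ 0 ∧ FLSemi ω q (fun x => φ' x * f x) Γ < ∞ := by
  set χ : EuclideanSpace ℝ (Fin d) → ℂ := fun x => g (x₀ - x) with hχdef
  have hχ : Continuous χ := hg.1.continuous.comp (continuous_const.sub continuous_id)
  have hχc : HasCompactSupport χ := hg.2.1.comp_homeomorph (Homeomorph.subLeft x₀)
  have hχi : Integrable χ := hχ.integrable_of_hasCompactSupport hχc
  obtain ⟨C, hC⟩ := hg.bounded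
  have hFi := hφ.mul_integrable hf
  set F : EuclideanSpace ℝ (Fin d) → ℂ := fun x => φ x * f x with hF
  set ψ : EuclideanSpace ℝ (Fin d) → ℂ := fun y => ∫ x, χ x * sh g x y with hψ
  have hψs : IsSCutoff s ψ := isSCutoff_conv hχ hχc hg
  have hψ0 : ψ x₀ ≠ 0 := by
    have e : ψ x₀ = ((∫ x, ‖χ x‖ ^ 2 : ℝ) : ℂ) := by
      rw [← integral_complex_ofReal]
      refine integral_congr_ae (Filter.Eventually.of_forall fun x => ?_)
      simp only [hχdef, sh, Complex.mul_conj, Complex.normSq_eq_norm_sq]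
    rw [e]
    obtain ⟨a, ha⟩ := Function.ne_iff.1 hg0
    have hpos : 0 < ∫ x, ‖χ x‖ ^ 2 := by
      refine Continuous.integral_pos_of_hasCompactSupport_nonneg_nonzero (x := x₀ - a)
        (by fun_prop) ?_ (fun _ => by positivity) ?_
      · exact hχc.comp_left (g := fun z : ℂ => ‖z‖ ^ 2) (by simp)
      · simpa [hχdef] using ha
    exact_mod_cast hpos.ne'
  refine ⟨fun x => φ x * ψ x, hφ.mul hs hψs, mul_ne_zero hφ0 hψ0, ?_⟩
  set K := tsupport χ with hK
  have hKc : IsCompact K := hχc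
  set D : ℝ≥0∞ := ENNReal.ofReal C * volume K ^ (1 / (1 : ℝ≥0∞).toReal - 1 / p.toReal) with hD
  have hDt : D ≠ ∞ := by
    refine ENNReal.mul_ne_top ENNReal.ofReal_ne_top
      (ENNReal.rpow_ne_top_of_nonneg ?_ hKc.measure_lt_top.ne)
    rw [ENNReal.toReal_one, div_one, sub_nonneg]
    by_cases hpt : p = ∞
    · simp [hpt]
    · have hr : 1 ≤ p.toReal := by
        rw [← ENNReal.toReal_one]; exact ENNReal.toReal_mono hpt hp
      rw [div_le_one (by linarith)]; exact hr
  have key : ∀ ξ, ‖FT (fun x => φ x * ψ x * f x) ξ‖ₑ ≤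
      D * eLpNorm (fun x => STFT g F x ξ) p volume := by
    intro ξ
    have e1 : (fun x => φ x * ψ x * f x) = fun y => F y * ∫ x, χ x * sh g x y := by
      funext y
      simp only [hF, hψ]
      ring
    rw [e1, FT_fub (integrable_fub hχi hFi hg.1.continuous hC)]
    simp_rw [← STFT_eq]
    have hc := continuous_STFT_fst hFi hg.1.continuous hC ξ
    refine (enorm_integral_le_lintegral_enorm _).trans ?_
    have e2 : ∫⁻ x, ‖χ x * STFT g F x ξ‖ₑ = ∫⁻ x in K, ‖χ x * STFT g F x ξ‖ₑ := by
      rw [setLIntegral_eq_of_support_subset]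
      intro x hx
      apply subset_tsupport
      intro h0
      simp [h0] at hx
    rw [e2]
    calc ∫⁻ x in K, ‖χ x * STFT g F x ξ‖ₑ
        ≤ ∫⁻ x in K, ENNReal.ofReal C * ‖STFT g F x ξ‖ₑ := by
          refine lintegral_mono fun x => ?_
          rw [enorm_mul]
          refine mul_le_mul_left ?_ _
          rw [← ofReal_norm]
          exact ENNReal.ofReal_le_ofReal (hC _)
      _ = ENNReal.ofReal C * eLpNorm (fun x => STFT g F x ξ) 1 (volume.restrict K) := by
          rw [lintegral_const_mul _ hc.measurable.enorm, eLpNorm_one_eq_lintegral_enorm]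
      _ ≤ ENNReal.ofReal C * (eLpNorm (fun x => STFT g F x ξ) p (volume.restrict K) *
            (volume.restrict K) univ ^ (1 / (1 : ℝ≥0∞).toReal - 1 / p.toReal)) := by
          refine mul_le_mul_right ?_ _
          exact eLpNorm_le_eLpNorm_mul_rpow_measure_univ hp hc.aestronglyMeasurable
      _ ≤ ENNReal.ofReal C * (eLpNorm (fun x => STFT g F x ξ) p volume *
            volume K ^ (1 / (1 : ℝ≥0∞).toReal - 1 / p.toReal)) := by
          rw [Measure.restrict_apply_univ]
          gcongr
          exact Measure.restrict_le_self
      _ = _ := by rw [hD]; ring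
  rw [ModSemi_eq _ _ _ _ _ hq] at hfin
  rw [FLSemi_eq _ _ hω]
  refine lt_of_le_of_lt (eLpNorm_le_mul_eLpNorm_of_ae_le_mul' (c := D.toNNReal)
    (Filter.Eventually.of_forall fun ξ => ?_) q) (ENNReal.mul_lt_top ENNReal.coe_lt_top hfin)
  rw [ENNReal.coe_toNNReal hDt, enorm_eq_self, enorm_eq_self, ← mul_assoc]
  exact mul_le_mul_left (key ξ) _

lemma cone_shrink {Γ : Set (EuclideanSpace ℝ (Fin d))} (hΓo : IsOpen Γ) (hΓ : IsCone Γ)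
    {ξ₀ : EuclideanSpace ℝ (Fin d)} (h0 : ξ₀ ∈ Γ) :
    ∃ Γ' : Set (EuclideanSpace ℝ (Fin d)), IsOpen Γ' ∧ IsCone Γ' ∧ ξ₀ ∈ Γ' ∧
      ∃ c : ℝ, 0 < c ∧ ∀ ξ ∈ Γ', ∀ η : EuclideanSpace ℝ (Fin d), ‖η‖ ≤ c * ‖ξ‖ → ξ - η ∈ Γ := by
  obtain ⟨ε, hε, hball⟩ := Metric.isOpen_iff.1 hΓo ξ₀ h0
  have hsub : ∀ z : EuclideanSpace ℝ (Fin d), ∀ t : ℝ, 0 < t → ‖t • z - ξ₀‖ < ε → z ∈ Γ := by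
    intro z t ht hz
    have h1 : t • z ∈ Γ := hball (by rwa [Metric.mem_ball, dist_eq_norm])
    have := hΓ.2 _ h1 t⁻¹ (inv_pos.2 ht)
    rwa [smul_smul, inv_mul_cancel₀ ht.ne', one_smul] at this
  refine ⟨{ξ | ∃ t : ℝ, 0 < t ∧ ‖t • ξ - ξ₀‖ < ε / 2}, ?_, ⟨?_, ?_⟩, ?_,
    (ε / 2) / (‖ξ₀‖ + ε / 2), by positivity, ?_⟩
  · have : {ξ : EuclideanSpace ℝ (Fin d) | ∃ t : ℝ, 0 < t ∧ ‖t • ξ - ξ₀‖ < ε / 2} =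
        ⋃ t : ℝ, ⋃ _ : 0 < t, {ξ | ‖t • ξ - ξ₀‖ < ε / 2} := by
      ext; simp
    rw [this]
    exact isOpen_iUnion fun t => isOpen_iUnion fun _ =>
      isOpen_lt (by fun_prop) continuous_const
  · rintro ⟨t, ht, h⟩
    exact hΓ.1 (hsub 0 t ht (by linarith))
  · rintro ξ ⟨t, ht, h⟩ r hr
    refine ⟨t / r, by positivity, ?_⟩
    rwa [smul_smul, div_mul_cancel₀ _ hr.ne']
  · exact ⟨1, one_pos, by simp; positivity⟩
  · rintro ξ ⟨t, ht, h⟩ η hη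
    refine hsub _ t ht ?_
    have h1 : ‖t • ξ‖ ≤ ‖ξ₀‖ + ε / 2 := by
      have : t • ξ = ξ₀ + (t • ξ - ξ₀) := by abel
      rw [this]
      exact (norm_add_le _ _).trans (by linarith)
    have h2 : ‖t • η‖ ≤ ε / 2 := by
      rw [norm_smul, Real.norm_of_nonneg ht.le] at h1 ⊢
      calc t * ‖η‖ ≤ t * ((ε / 2) / (‖ξ₀‖ + ε / 2) * ‖ξ‖) := by gcongr
        _ = (ε / 2) / (‖ξ₀‖ + ε / 2) * (t * ‖ξ‖) := by ring
        _ ≤ (ε / 2) / (‖ξ₀‖ + ε / 2) * (‖ξ₀‖ + ε / 2) := by gcongr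
        _ = ε / 2 := by field_simp
    have h3 : t • (ξ - η) - ξ₀ = (t • ξ - ξ₀) - t • η := by rw [smul_sub]; abel
    rw [h3]
    exact (norm_sub_le _ _).trans_lt (by linarith)

lemma pointwise {s : ℝ} (hs : 1 < s) {ω : EuclideanSpace ℝ (Fin d) → ℝ} (hω : IsSAdmissible s ω)
    {g : EuclideanSpace ℝ (Fin d) → ℂ} (hg : IsSCutoff s g)
    (F : EuclideanSpace ℝ (Fin d) → ℂ) {c : ℝ} (hc : 0 < c) :
    ∃ c₁ c₂ : ℝ, 0 ≤ c₁ ∧ 0 ≤ c₂ ∧ ∀ ξ η : EuclideanSpace ℝ (Fin d),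
      (‖FT g (-η)‖ * ‖FT F (ξ - η)‖ * ω ξ ≤
        (c₁ * Real.exp (-1 * ‖η‖ ^ (1 / s))) * (‖FT F (ξ - η)‖ * ω (ξ - η))) ∧
      (c * ‖ξ‖ ≤ ‖η‖ → ‖FT g (-η)‖ * ‖FT F (ξ - η)‖ * ω ξ ≤
        c₂ * Real.exp (-1 * ‖ξ‖ ^ (1 / s)) * Real.exp (-1 * ‖η‖ ^ (1 / s))) := by
  obtain ⟨-, hpos, v, -, hvpos, -, -, C₀, k₀, C₁, hC₀, hk₀, hC₁, hv, hmod⟩ := hω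
  have hα : 0 ≤ 1 / s := by positivity
  have hca : 0 < c ^ (1 / s) := Real.rpow_pos_of_pos hc _
  obtain ⟨A, hA, hA'⟩ := hg.2.2 (k₀ + 1) (by linarith)
  obtain ⟨B, hB, hB'⟩ := hg.2.2 ((k₀ + 1) / c ^ (1 / s) + 1) (by positivity)
  set L := cst d * ∫ x, ‖F x‖ with hL
  have hL0 : 0 ≤ L := mul_nonneg (cst_pos d).le (integral_nonneg fun _ => norm_nonneg _)
  have hω0 := hpos 0
  refine ⟨A * (C₁ * C₀), B * L * (C₁ * C₀ * ω 0), by positivity, by positivity, fun ξ η => ⟨?_, ?_⟩⟩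
  · have h1 := hA' (-η)
    rw [norm_neg] at h1
    have h2 : ω ξ ≤ C₁ * (C₀ * Real.exp (k₀ * ‖η‖ ^ (1 / s))) * ω (ξ - η) := by
      have h3 := hmod η (ξ - η)
      rw [add_sub_cancel] at h3
      refine h3.trans ?_
      have := hv η
      have := hpos (ξ - η)
      gcongr
    have hp := hpos (ξ - η)
    have hpξ := hpos ξ
    calc ‖FT g (-η)‖ * ‖FT F (ξ - η)‖ * ω ξ
        ≤ (A * Real.exp (-(k₀ + 1) * ‖η‖ ^ (1 / s))) * ‖FT F (ξ - η)‖ *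
          (C₁ * (C₀ * Real.exp (k₀ * ‖η‖ ^ (1 / s))) * ω (ξ - η)) := by gcongr
      _ = A * (C₁ * C₀) * (Real.exp (-(k₀ + 1) * ‖η‖ ^ (1 / s)) *
          Real.exp (k₀ * ‖η‖ ^ (1 / s))) * (‖FT F (ξ - η)‖ * ω (ξ - η)) := by ring
      _ = _ := by
          rw [← Real.exp_add]
          congr 3
          ring
  · intro hξη
    have h1 := hB' (-η)
    rw [norm_neg] at h1
    have h2 : ω ξ ≤ C₁ * (C₀ * Real.exp (k₀ * ‖ξ‖ ^ (1 / s))) * ω 0 := by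
      have h3 := hmod ξ 0
      rw [add_zero] at h3
      refine h3.trans ?_
      have := hv ξ
      gcongr
    have hpξ := hpos ξ
    have h4 : c ^ (1 / s) * ‖ξ‖ ^ (1 / s) ≤ ‖η‖ ^ (1 / s) := by
      rw [← Real.mul_rpow hc.le (norm_nonneg _)]
      exact Real.rpow_le_rpow (by positivity) hξη hα
    have h5 : (k₀ + 1) * ‖ξ‖ ^ (1 / s) ≤ (k₀ + 1) / c ^ (1 / s) * ‖η‖ ^ (1 / s) := by
      rw [div_mul_eq_mul_div, le_div_iff₀ hca]
      nlinarith
    calc ‖FT g (-η)‖ * ‖FT F (ξ - η)‖ * ω ξ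
        ≤ (B * Real.exp (-((k₀ + 1) / c ^ (1 / s) + 1) * ‖η‖ ^ (1 / s))) * L *
          (C₁ * (C₀ * Real.exp (k₀ * ‖ξ‖ ^ (1 / s))) * ω 0) := by
          have := norm_FT_le F (ξ - η)
          gcongr
      _ = B * L * (C₁ * C₀ * ω 0) * (Real.exp (-((k₀ + 1) / c ^ (1 / s) + 1) * ‖η‖ ^ (1 / s)) *
          Real.exp (k₀ * ‖ξ‖ ^ (1 / s))) := by ring
      _ ≤ B * L * (C₁ * C₀ * ω 0) * (Real.exp (-1 * ‖ξ‖ ^ (1 / s)) *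
            Real.exp (-1 * ‖η‖ ^ (1 / s))) := by
          rw [← Real.exp_add, ← Real.exp_add]
          have : -((k₀ + 1) / c ^ (1 / s) + 1) * ‖η‖ ^ (1 / s) + k₀ * ‖ξ‖ ^ (1 / s) ≤
            -1 * ‖ξ‖ ^ (1 / s) + -1 * ‖η‖ ^ (1 / s) := by linarith
          gcongr
      _ = _ := by ring

lemma STFT_bound {s : ℝ} (hs : 1 < s) (p : ℝ≥0∞)
    {g : EuclideanSpace ℝ (Fin d) → ℂ} (hg : IsSCutoff s g)
    {F : EuclideanSpace ℝ (Fin d) → ℂ} (hF : Integrable F) (hFc : HasCompactSupport F) :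
    ∃ A : ℝ≥0∞, A ≠ ∞ ∧ ∀ ξ, eLpNorm (fun x => STFT g F x ξ) p volume ≤
      A * ∫⁻ η, ‖FT g (-η)‖ₑ * ‖FT F (ξ - η)‖ₑ := by
  set K : Set (EuclideanSpace ℝ (Fin d)) :=
    (fun z : EuclideanSpace ℝ (Fin d) × EuclideanSpace ℝ (Fin d) => z.1 - z.2) ''
      (tsupport F ×ˢ tsupport g) with hK
  have hKc : IsCompact K := (IsCompact.prod hFc hg.2.1).image (by fun_prop)
  refine ⟨ENNReal.ofReal (cst d) * volume K ^ (1 / p.toReal), ENNReal.mul_ne_top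
    ENNReal.ofReal_ne_top (ENNReal.rpow_ne_top_of_nonneg (by positivity) hKc.measure_lt_top.ne),
    fun ξ => ?_⟩
  set B : ℝ≥0∞ := ENNReal.ofReal (cst d) * ∫⁻ η, ‖FT g (-η)‖ₑ * ‖FT F (ξ - η)‖ₑ with hB
  have h1 : ∀ x, ‖STFT g F x ξ‖ₑ ≤ K.indicator (fun _ => B) x := by
    intro x
    by_cases hx : x ∈ K
    · rw [indicator_of_mem hx, STFT_eq]
      have hh := hg.sh x
      refine (enorm_FT_mul_le hF hh.1.continuous hh.integrable (hh.integrable_FT hs) ξ).trans ?_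
      refine le_of_eq ?_
      rw [hB]
      congr 2
      funext η
      rw [← ofReal_norm, norm_FT_sh, ofReal_norm]
    · have : STFT g F x ξ = 0 := by
        unfold STFT
        have hz : ∀ y, F y * (starRingEnd ℂ) (g (y - x)) *
            Complex.exp (-(⟪ξ, y⟫ : ℝ) * Complex.I) = 0 := by
          intro y
          by_cases h1 : F y = 0
          · simp [h1]
          by_cases h2 : g (y - x) = 0
          · simp [h2]
          exact absurd ⟨(y, y - x), ⟨subset_tsupport _ h1, subset_tsupport _ h2⟩, by simp⟩ hx
        simp only [hz, integral_zero, mul_zero]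
      simp [this]
  refine (eLpNorm_mono_enorm (g := K.indicator (fun _ => B)) fun x => ?_).trans ?_
  · rw [enorm_eq_self]; exact h1 x
  · refine (eLpNorm_indicator_const_le B p).trans (le_of_eq ?_)
    rw [enorm_eq_self, hB]
    ring

lemma dir1 {s : ℝ} (hs : 1 < s) {p q : ℝ≥0∞} (hq : 1 ≤ q)
    {ω : EuclideanSpace ℝ (Fin d) → ℝ} (hω : IsSAdmissible s ω)
    {g : EuclideanSpace ℝ (Fin d) → ℂ} (hg : IsSCutoff s g)
    {F : EuclideanSpace ℝ (Fin d) → ℂ} (hF : Integrable F) (hFc : HasCompactSupport F)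
    {Γ : Set (EuclideanSpace ℝ (Fin d))} (hΓo : IsOpen Γ) (hΓ : IsCone Γ)
    {ξ₀ : EuclideanSpace ℝ (Fin d)} (h0 : ξ₀ ∈ Γ)
    (hfin : FLSemi ω q F Γ < ∞) :
    ∃ Γ' : Set (EuclideanSpace ℝ (Fin d)), IsOpen Γ' ∧ IsCone Γ' ∧ ξ₀ ∈ Γ' ∧
      ModSemi g F ω p q Γ' < ∞ := by
  obtain ⟨Γ', ho, hcone, hmem, c, hc, hsub⟩ := cone_shrink hΓo hΓ h0
  obtain ⟨c₁, c₂, hc₁, hc₂, hpt⟩ := pointwise hs hω hg F hc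
  obtain ⟨A, hA, hbd⟩ := STFT_bound hs p hg hF hFc
  refine ⟨Γ', ho, hcone, hmem, ?_⟩
  rw [FLSemi_eq _ _ hω.2.1] at hfin
  rw [ModSemi_eq _ _ _ _ _ hq]
  set a₀ : EuclideanSpace ℝ (Fin d) → ℝ≥0∞ := fun ξ => ‖FT F ξ‖ₑ * ENNReal.ofReal (ω ξ) with ha₀
  have ha₀m : Measurable a₀ :=
    (continuous_FT hF).measurable.enorm.mul hω.1.ennreal_ofReal
  set a := Γ.indicator a₀ with ha
  have ham : Measurable a := ha₀m.indicator hΓo.measurableSet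
  set e : EuclideanSpace ℝ (Fin d) → ℝ≥0∞ :=
    fun η => ENNReal.ofReal (Real.exp (-1 * ‖η‖ ^ (1 / s))) with he
  have hem : Measurable e := (continuous_expw hs 1).measurable.ennreal_ofReal
  have hei : ∫⁻ η, e η < ∞ := lintegral_expw hs one_pos
  have he1 : ∀ x, e x ≤ 1 := by
    intro x
    rw [← ENNReal.ofReal_one]
    refine ENNReal.ofReal_le_ofReal (Real.exp_le_one_iff.2 ?_)
    have : 0 ≤ ‖x‖ ^ (1 / s) := by positivity
    linarith
  set b : EuclideanSpace ℝ (Fin d) → ℝ≥0∞ := fun η => ENNReal.ofReal c₁ * e η with hb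
  have hbm : Measurable b := hem.const_mul _
  have hbi : ∫⁻ η, b η < ∞ := by
    rw [lintegral_const_mul _ hem]
    exact ENNReal.mul_lt_top ENNReal.ofReal_lt_top hei
  have haq : eLpNorm a q volume < ∞ := by
    rw [ha, eLpNorm_indicator_eq_eLpNorm_restrict hΓo.measurableSet]
    exact hfin
  set Y : EuclideanSpace ℝ (Fin d) → ℝ≥0∞ := fun ξ => ∫⁻ η, b η * a (ξ - η) with hY
  have hYq : eLpNorm Y q volume < ∞ := young ham hbm hq haq hbi
  have hYm : Measurable Y := by
    have hm2 : Measurable fun z : EuclideanSpace ℝ (Fin d) × EuclideanSpace ℝ (Fin d) =>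
        b z.2 * a (z.1 - z.2) :=
      (hbm.comp measurable_snd).mul (ham.comp (measurable_fst.sub measurable_snd))
    exact hm2.lintegral_prod_right'
  set D : ℝ≥0∞ := ENNReal.ofReal c₂ * ∫⁻ η, e η with hD
  have hDt : D ≠ ∞ := ENNReal.mul_ne_top ENNReal.ofReal_ne_top hei.ne
  set Z : EuclideanSpace ℝ (Fin d) → ℝ≥0∞ := fun ξ => D * e ξ with hZ
  have hZm : Measurable Z := hem.const_mul _
  have hZq : eLpNorm Z q volume < ∞ := by
    refine lt_of_le_of_lt (eLpNorm_le_mul_eLpNorm_of_ae_le_mul' (c := D.toNNReal) (g := e)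
      (Filter.Eventually.of_forall fun ξ => ?_) q)
      (ENNReal.mul_lt_top ENNReal.coe_lt_top (eLpNorm_lt_top_of_le_one he1 hei hq))
    rw [ENNReal.coe_toNNReal hDt, enorm_eq_self, enorm_eq_self]
  have key : ∀ ξ ∈ Γ', eLpNorm (fun x => STFT g F x ξ) p volume * ENNReal.ofReal (ω ξ) ≤
      A * (Y + Z) ξ := by
    intro ξ hξ
    refine (mul_le_mul_left (hbd ξ) _).trans ?_
    rw [mul_assoc]
    refine mul_le_mul_right ?_ _
    have hgm : Measurable fun η => ‖FT g (-η)‖ₑ * ‖FT F (ξ - η)‖ₑ := by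
      have m1 : Measurable fun η => ‖FT g (-η)‖ₑ :=
        ((continuous_FT hg.integrable).comp continuous_neg).measurable.enorm
      have m2 : Measurable fun η => ‖FT F (ξ - η)‖ₑ :=
        ((continuous_FT hF).comp (continuous_const.sub continuous_id)).measurable.enorm
      exact m1.mul m2
    rw [← lintegral_mul_const _ hgm]
    have hYZ : (Y + Z) ξ = ∫⁻ η, (b η * a (ξ - η) + ENNReal.ofReal c₂ * e ξ * e η) := by
      rw [lintegral_add_right _ (hem.const_mul _), lintegral_const_mul _ hem]
      simp only [Pi.add_apply, hY, hZ, hD]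
      ring
    rw [hYZ]
    refine lintegral_mono fun η => ?_
    have hl : ‖FT g (-η)‖ₑ * ‖FT F (ξ - η)‖ₑ * ENNReal.ofReal (ω ξ) =
        ENNReal.ofReal (‖FT g (-η)‖ * ‖FT F (ξ - η)‖ * ω ξ) := by
      rw [ENNReal.ofReal_mul (by positivity), ENNReal.ofReal_mul (by positivity),
        ofReal_norm, ofReal_norm]
    simp only [hl]
    rcases le_total ‖η‖ (c * ‖ξ‖) with h | h
    · refine le_trans ?_ le_self_add
      refine (ENNReal.ofReal_le_ofReal (hpt ξ η).1).trans (le_of_eq ?_)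
      rw [ha, indicator_of_mem (hsub ξ hξ η h), ENNReal.ofReal_mul (by positivity),
        ENNReal.ofReal_mul hc₁, ENNReal.ofReal_mul (norm_nonneg _), ofReal_norm]
    · refine le_trans ?_ le_add_self
      refine (ENNReal.ofReal_le_ofReal ((hpt ξ η).2 h)).trans (le_of_eq ?_)
      rw [ENNReal.ofReal_mul (by positivity), ENNReal.ofReal_mul hc₂]
  refine lt_of_le_of_lt (eLpNorm_le_mul_eLpNorm_of_ae_le_mul' (c := A.toNNReal) (g := Y + Z)
    (ae_restrict_of_forall_mem ho.measurableSet fun ξ hξ => ?_) q)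
    (ENNReal.mul_lt_top ENNReal.coe_lt_top ?_)
  · rw [ENNReal.coe_toNNReal hA, enorm_eq_self, enorm_eq_self]
    exact key ξ hξ
  · refine lt_of_le_of_lt (eLpNorm_mono_measure _ Measure.restrict_le_self) ?_
    refine lt_of_le_of_lt (eLpNorm_add_le hYm.aestronglyMeasurable hZm.aestronglyMeasurable hq) ?_
    exact ENNReal.add_lt_top.2 ⟨hYq, hZq⟩

theorem stmt10 {d : ℕ} (s : ℝ) (hs : 1 < s) (p q : ℝ≥0∞) (hp : 1 ≤ p) (hq : 1 ≤ q)
    (ω : EuclideanSpace ℝ (Fin d) → ℝ) (hω : IsSAdmissible s ω)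
    (g : EuclideanSpace ℝ (Fin d) → ℂ) (hg : IsSCutoff s g) (hg0 : g ≠ 0)
    (f : EuclideanSpace ℝ (Fin d) → ℂ) (hf : Integrable f) (hfc : HasCompactSupport f) :
    WF_M s p q ω g f = WF_FL s q ω f := by
  ext ⟨x₀, ξ₀⟩
  refine and_congr_right fun _ => ⟨fun h φ hφ hφ0 Γ hΓo hΓ hξ => ?_,
    fun h φ hφ hφ0 Γ hΓo hΓ hξ => ?_⟩
  · by_contra hne
    obtain ⟨Γ', ho, hc, hm, hfin⟩ := dir1 (p := p) hs hq hω hg (hφ.mul_integrable hf)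
      hφ.2.1.mul_right hΓo hΓ hξ (lt_top_iff_ne_top.2 hne)
    exact hfin.ne (h φ hφ hφ0 Γ' ho hc hm)
  · by_contra hne
    obtain ⟨φ', h1, h2, hfin⟩ := dir2 hs hp hq hω.2.1 hg hg0 hf hφ hφ0 (lt_top_iff_ne_top.2 hne)
    exact hfin.ne (h φ' h1 h2 Γ hΓo hΓ hξ)

end Paper
end
end

section
/- Let s > 1, q ∈ [1,∞), let ω be an s-admissible weight on ℝ^d, let f ∈ L¹(ℝ^d) have compact support, let Γ₀ ⊂⊂ Γ be open cones in ℝ^d ∖ {0}, and let Λ = A(ℤ^d) for an invertible d×d real matrix A. If ∫_Γ (|f̂(ξ)|·ω(ξ))^q dξ < ∞, then Σ_{λ ∈ Λ ∩ Γ₀} (|f̂(λ)|·ω(λ))^q < ∞. -/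
open MeasureTheory Complex Set
open scoped ENNReal RealInnerProductSpace NNReal

noncomputable section

namespace Paper

variable {d : ℕ}

section Aux
open scoped FourierTransform

abbrev EE (d : ℕ) := EuclideanSpace ℝ (Fin d)

/-- `Φ` is integrable and its inverse transform equals one on the ball of radius `R`. -/
def Rep (R : ℝ) (Φ : EE d → ℂ) : Prop :=
  Integrable Φ ∧ ∀ x : EE d, ‖x‖ ≤ R → ∫ η, Φ η * Complex.exp ((⟪x, η⟫ : ℝ) * Complex.I) = 1

theorem rep_base (R : ℝ) : ∃ Φ : EE d → ℂ, Rep R Φ ∧ ∃ B : ℝ, ∀ η, ‖Φ η‖ ≤ B := by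
  let b : ContDiffBump (0 : EE d) := ⟨max R 1, max R 1 + 1, by positivity, by linarith⟩
  let φ : SchwartzMap (EE d) ℂ := HasCompactSupport.toSchwartzMap (f := fun x => ((b x : ℝ) : ℂ))
    (b.hasCompactSupport.comp_left (g := fun x : ℝ => (x : ℂ)) (by simp))
    (Complex.ofRealCLM.contDiff.comp b.contDiff)
  let ψ : SchwartzMap (EE d) ℂ := 𝓕 φ
  have hpi : (2 * Real.pi) ≠ 0 := by positivity
  let c : ℝ := ((2 * Real.pi)⁻¹) ^ d
  have hc : 0 < c := by positivity
  refine ⟨fun η => (c : ℂ) * ψ ((2 * Real.pi)⁻¹ • η), ⟨?_, ?_⟩, ?_⟩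
  · exact (ψ.integrable.comp_smul (inv_ne_zero hpi)).const_mul _
  · intro x hx
    have h1 : 𝓕⁻ ψ = φ := by simp [ψ]
    have h2 : (𝓕⁻ ψ : SchwartzMap (EE d) ℂ) x = 1 := by
      rw [h1]
      have : b x = 1 := by
        apply b.one_of_mem_closedBall
        simpa [b] using Or.inl hx
      change ((b x : ℝ) : ℂ) = 1
      rw [this]; simp
    rw [SchwartzMap.fourierInv_coe, Real.fourierInv_eq'] at h2
    have h3 := Measure.integral_comp_smul (volume : Measure (EE d))
      (fun v : EE d => Complex.exp ((2 * Real.pi * ⟪v, x⟫ : ℝ) * Complex.I) • ψ v) (2 * Real.pi)⁻¹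
    rw [h2] at h3
    simp only [finrank_euclideanSpace_fin] at h3
    have h4 : (c : ℂ) * (|((2 * Real.pi)⁻¹ ^ d)⁻¹| • (1 : ℂ)) = 1 := by
      rw [abs_of_pos (by positivity)]
      have : (c : ℂ) ≠ 0 := by exact_mod_cast hc.ne'
      rw [Complex.real_smul]
      change (c : ℂ) * (((c⁻¹ : ℝ) : ℂ) * 1) = 1
      push_cast
      field_simp
    rw [← h4, ← h3, ← integral_const_mul]
    congr 1
    ext η
    have : 2 * Real.pi * ⟪(2 * Real.pi)⁻¹ • η, x⟫ = ⟪x, η⟫ := by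
      rw [real_inner_smul_left, real_inner_comm]; field_simp
    rw [this, smul_eq_mul]
    ring
  · obtain ⟨C, hC⟩ := ψ.decay 0 0
    refine ⟨c * C, fun η => ?_⟩
    have := hC.2 ((2 * Real.pi)⁻¹ • η)
    simp at this
    rw [norm_mul, Complex.norm_real, Real.norm_of_nonneg hc.le]
    gcongr
    simpa using this

/-- averaged character -/
def mfac (u : ℝ) : ℂ := ∫ t in (0 : ℝ)..1, Complex.exp ((t * u : ℝ) * Complex.I)

theorem mfac_le_one (u : ℝ) : ‖mfac u‖ ≤ 1 := by
  have := intervalIntegral.norm_integral_le_of_norm_le_const (a := (0:ℝ)) (b := 1) (C := 1)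
    (f := fun t : ℝ => Complex.exp ((t * u : ℝ) * Complex.I))
    (fun t _ => by rw [Complex.norm_exp_ofReal_mul_I])
  simpa [mfac] using this

theorem mfac_le (u : ℝ) (hu : u ≠ 0) : ‖mfac u‖ ≤ 2 / |u| := by
  have hu' : (u : ℂ) * Complex.I ≠ 0 := by simp [hu]
  have : mfac u = ∫ t in (0 : ℝ)..1, Complex.exp (((u : ℂ) * Complex.I) * t) := by
    unfold mfac; congr 1; ext t; push_cast; ring_nf
  rw [this, integral_exp_mul_complex hu', norm_div]
  have h1 : ‖(u : ℂ) * Complex.I‖ = |u| := by simp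
  rw [h1]
  gcongr
  refine (norm_sub_le _ _).trans ?_
  have : (u : ℂ) * Complex.I * ((1 : ℝ) : ℂ) = (u : ℂ) * Complex.I := by simp
  rw [this, Complex.norm_exp_ofReal_mul_I]
  simp
  norm_num

theorem mfac_continuous : Continuous mfac := by
  unfold mfac
  apply intervalIntegral.continuous_parametric_intervalIntegral_of_continuous'
  fun_prop

theorem rep_step {R a : ℝ} (ha : 0 ≤ a) {Φ : EE d → ℂ} (h : Rep R Φ) (e : EE d) (he : ‖e‖ ≤ 1) :
    Rep (R - a) (fun η => Φ η * mfac (a * ⟪e, η⟫)) := by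
  refine ⟨?_, ?_⟩
  · refine h.1.mul_bdd (c := 1) ?_ ?_
    · exact (mfac_continuous.comp (by fun_prop)).aestronglyMeasurable
    · exact Filter.Eventually.of_forall fun η => mfac_le_one _
  · intro x hx
    have key : ∀ η : EE d, Φ η * mfac (a * ⟪e, η⟫) * Complex.exp ((⟪x, η⟫ : ℝ) * Complex.I)
        = ∫ t in Set.Ioc (0:ℝ) 1, Φ η * Complex.exp ((⟪x + (t * a) • e, η⟫ : ℝ) * Complex.I) := by
      intro η
      rw [integral_const_mul, mul_assoc]
      congr 1
      rw [mfac, intervalIntegral.integral_of_le zero_le_one, ← integral_mul_const]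
      congr 1
      ext t
      rw [← Complex.exp_add]
      congr 1
      rw [inner_add_left, real_inner_smul_left]
      push_cast
      ring
    simp_rw [key]
    rw [integral_integral_swap]
    · have : ∀ t ∈ Set.Ioc (0:ℝ) 1,
          ∫ η, Φ η * Complex.exp ((⟪x + (t * a) • e, η⟫ : ℝ) * Complex.I) = 1 := by
        intro t ht
        apply h.2
        refine (norm_add_le _ _).trans ?_
        rw [norm_smul, Real.norm_of_nonneg (mul_nonneg ht.1.le ha)]
        have : t * a * ‖e‖ ≤ 1 * a * 1 := by
          gcongr
          exact ht.2
        linarith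
      rw [setIntegral_congr_fun measurableSet_Ioc this]
      simp
    · have h1 : Integrable (fun p : EE d × ℝ => Φ p.1)
          (volume.prod (volume.restrict (Set.Ioc (0:ℝ) 1))) := h.1.comp_fst _
      refine h1.mul_bdd (c := 1) ?_ ?_
      · apply Continuous.aestronglyMeasurable
        fun_prop
      · exact Filter.Eventually.of_forall fun p => by rw [Complex.norm_exp_ofReal_mul_I]

theorem rep_prod {R a : ℝ} (ha : 0 ≤ a) {Φ : EE d → ℂ} (h : Rep R Φ) (s : Finset (Fin d)) :
    Rep (R - s.card * a) (fun η => Φ η * ∏ i ∈ s, mfac (a * η i)) := by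
  classical
  induction s using Finset.induction_on with
  | empty => simpa using h
  | insert i s hi ih =>
    have := rep_step ha ih (EuclideanSpace.single i (1:ℝ)) (by simp)
    rw [Finset.card_insert_of_notMem hi]
    convert this using 1
    · push_cast; ring
    · ext η
      have hin : ⟪(EuclideanSpace.single i (1:ℝ) : EE d), η⟫ = η i := by
        rw [EuclideanSpace.inner_single_left]; simp
      rw [Finset.prod_insert hi, hin]
      ring

end Aux

section Aux2

theorem Rep.mono {R R' : ℝ} {Φ : EE d → ℂ} (h : Rep R Φ) (hR : R' ≤ R) : Rep R' Φ :=
  ⟨h.1, fun x hx => h.2 x (hx.trans hR)⟩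

theorem exists_coord (hd : 0 < d) (η : EE d) : ∃ i, ‖η‖ ≤ d * |η i| := by
  have : Nonempty (Fin d) := ⟨⟨0, hd⟩⟩
  obtain ⟨i, hi⟩ := Finite.exists_max (fun i => |η i|)
  refine ⟨i, ?_⟩
  have hd1 : (1:ℝ) ≤ d := by exact_mod_cast hd
  rw [EuclideanSpace.norm_eq]
  apply Real.sqrt_le_iff.mpr
  refine ⟨by positivity, ?_⟩
  have : ∑ j, ‖η j‖ ^ 2 ≤ ∑ j : Fin d, |η i| ^ 2 := by
    apply Finset.sum_le_sum
    intro j _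
    rw [Real.norm_eq_abs]
    exact pow_le_pow_left₀ (abs_nonneg _) (hi j) 2
  simp at this
  simp
  nlinarith [sq_nonneg (η i), mul_pow (d:ℝ) |η i| 2, sq_abs (η i)]

theorem kernels (hd : 0 < d) (R σ : ℝ) (hσ : 1 < σ) :
    ∃ (Ψ : ℕ → EE d → ℂ) (B c : ℝ), 0 ≤ B ∧ 0 < c ∧ (∀ n, Rep R (Ψ n)) ∧
      (∀ η, Antitone fun n => ‖Ψ n η‖) ∧
      ∀ η, ∃ n, ‖Ψ n η‖ ≤ B * Real.exp (-(c * ‖η‖ ^ (1 / σ))) := by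
  have hσ0 : 0 < σ := by linarith
  have hd' : (0:ℝ) < d := by exact_mod_cast hd
  let a : ℕ → ℝ := fun k => 1 / ((k:ℝ) + 1) ^ σ
  have ha : ∀ k, 0 ≤ a k := fun k => by positivity
  have hsum : Summable a := by
    have := (summable_nat_add_iff 1).mpr (Real.summable_one_div_nat_rpow.mpr hσ)
    simpa [a] using this
  obtain ⟨Φ, hΦ, B, hB⟩ := rep_base (d := d) (R + d * ∑' k, a k)
  have hB0 : 0 ≤ B := (norm_nonneg _).trans (hB 0)
  let Ψ : ℕ → EE d → ℂ := fun n η => Φ η * ∏ k ∈ Finset.range n, ∏ i, mfac (a k * η i)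
  have hsucc : ∀ n η, Ψ (n+1) η = Ψ n η * ∏ i, mfac (a n * η i) := by
    intro n η
    simp only [Ψ, Finset.prod_range_succ]
    ring
  have hp1 : ∀ (k : ℕ) (η : EE d), ‖∏ i, mfac (a k * η i)‖ ≤ 1 := by
    intro k η
    rw [norm_prod]
    exact Finset.prod_le_one (fun i _ => norm_nonneg _) (fun i _ => mfac_le_one _)
  have hrep : ∀ n, Rep (R + d * ∑' k, a k - d * ∑ k ∈ Finset.range n, a k) (Ψ n) := by
    intro n
    induction n with
    | zero => simpa [Ψ] using hΦ
    | succ n ih =>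
      have := rep_prod (ha n) ih Finset.univ
      have h2 : Ψ (n+1) = fun η => Ψ n η * ∏ i, mfac (a n * η i) := by
        ext η; exact hsucc n η
      rw [h2]
      refine this.mono (le_of_eq ?_)
      rw [Finset.sum_range_succ]
      simp
      ring
  let c0 : ℝ := 1 / (2 * Real.exp 1 * d)
  have hc0 : 0 < c0 := by positivity
  refine ⟨Ψ, B * Real.exp 1, c0 ^ (1/σ), by positivity, by positivity, ?_, ?_, ?_⟩
  · intro n
    refine (hrep n).mono ?_
    have := hsum.sum_le_tsum (Finset.range n) (fun k _ => ha k)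
    nlinarith
  · intro η
    apply antitone_nat_of_succ_le
    intro n
    rw [hsucc, norm_mul]
    exact mul_le_of_le_one_right (norm_nonneg _) (hp1 n η)
  · intro η
    set T : ℝ := (c0 * ‖η‖) ^ (1/σ) with hT
    have hT0 : 0 ≤ T := by positivity
    refine ⟨⌊T⌋₊, ?_⟩
    obtain ⟨i, hi⟩ := exists_coord hd η
    have hfac : ∀ k ∈ Finset.range ⌊T⌋₊, ‖∏ i, mfac (a k * η i)‖ ≤ Real.exp (-1) := by
      intro k hk
      rw [Finset.mem_range] at hk
      have h1 : ((k:ℝ) + 1) ≤ T := by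
        have : ((k + 1 : ℕ) : ℝ) ≤ T := (Nat.le_floor_iff hT0).mp hk
        simpa using this
      have h2 : ((k:ℝ) + 1) ^ σ ≤ c0 * ‖η‖ := by
        calc ((k:ℝ) + 1) ^ σ ≤ T ^ σ := by gcongr
          _ = c0 * ‖η‖ := by
            rw [hT, ← Real.rpow_mul (by positivity)]
            simp [hσ0.ne']
      have hk0 : 0 < ((k:ℝ) + 1) ^ σ := by positivity
      have h3 : 2 * Real.exp 1 ≤ |a k * η i| := by
        rw [abs_mul, abs_of_nonneg (ha k)]
        change _ ≤ 1 / ((k:ℝ) + 1) ^ σ * |η i|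
        rw [one_div_mul_eq_div, le_div_iff₀ hk0]
        calc 2 * Real.exp 1 * ((k:ℝ) + 1) ^ σ ≤ 2 * Real.exp 1 * (c0 * (d * |η i|)) := by
              gcongr
              exact h2.trans (by gcongr)
          _ = |η i| := by simp only [c0]; field_simp
      have h4 : a k * η i ≠ 0 := by
        intro h0
        rw [h0, abs_zero] at h3
        have := Real.exp_pos 1
        linarith
      rw [norm_prod, ← Finset.mul_prod_erase _ _ (Finset.mem_univ i)]
      have h5 : ∏ j ∈ Finset.univ.erase i, ‖mfac (a k * η j)‖ ≤ 1 :=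
        Finset.prod_le_one (fun i _ => norm_nonneg _) (fun i _ => mfac_le_one _)
      refine (mul_le_of_le_one_right (norm_nonneg _) h5).trans ((mfac_le _ h4).trans ?_)
      rw [Real.exp_neg, div_le_iff₀ (abs_pos.mpr h4)]
      have := Real.exp_pos 1
      calc (2:ℝ) = (Real.exp 1)⁻¹ * (2 * Real.exp 1) := by field_simp
        _ ≤ _ := by gcongr
    simp only [Ψ]
    rw [norm_mul, norm_prod]
    have h6 := Finset.prod_le_prod (fun k _ => norm_nonneg _) hfac
    rw [Finset.prod_const, Finset.card_range, ← Real.exp_nat_mul] at h6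
    have h7 : Real.exp ((⌊T⌋₊ : ℝ) * -1) ≤ Real.exp 1 * Real.exp (-T) := by
      rw [← Real.exp_add]
      apply Real.exp_le_exp.mpr
      have := Nat.lt_floor_add_one T
      linarith
    rw [← Real.mul_rpow hc0.le (norm_nonneg _), ← hT, mul_assoc]
    exact mul_le_mul (hB η) (h6.trans h7) (Finset.prod_nonneg fun _ _ => norm_nonneg _) hB0

theorem FT_continuous (f : EE d → ℂ) (hf : Integrable f) : Continuous (FT f) := by
  unfold FT
  refine continuous_const.mul ?_
  refine continuous_of_dominated (bound := fun x => ‖f x‖) ?_ ?_ hf.norm ?_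
  · intro ξ
    exact hf.1.mul (by fun_prop)
  · intro ξ
    refine Filter.Eventually.of_forall fun x => ?_
    rw [norm_mul, ← Complex.ofReal_neg, Complex.norm_exp_ofReal_mul_I, mul_one]
  · refine Filter.Eventually.of_forall fun x => ?_
    fun_prop

theorem FT_bdd (f : EE d → ℂ) : ∃ M : ℝ, 0 < M ∧ ∀ ξ, ‖FT f ξ‖ ≤ M := by
  refine ⟨((2 * Real.pi) ^ (-(d : ℝ) / 2)) * (∫ x, ‖f x‖) + 1, ?_, fun ξ => ?_⟩
  · have : 0 ≤ ∫ x, ‖f x‖ := integral_nonneg fun _ => norm_nonneg _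
    positivity
  · unfold FT
    rw [norm_mul, Complex.norm_real, Real.norm_of_nonneg (by positivity)]
    refine le_trans ?_ (le_add_of_nonneg_right zero_le_one)
    gcongr
    refine (norm_integral_le_integral_norm _).trans (le_of_eq ?_)
    congr 1
    ext x
    rw [norm_mul, ← Complex.ofReal_neg, Complex.norm_exp_ofReal_mul_I, mul_one]

theorem repro {R : ℝ} {Φ : EE d → ℂ} (hΦ : Rep R Φ) (f : EE d → ℂ) (hf : Integrable f)
    (hR : ∀ x, f x ≠ 0 → ‖x‖ ≤ R) (l : EE d) :
    FT f l = ∫ η, FT f (l - η) * Φ η := by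
  unfold FT
  simp_rw [mul_assoc]
  rw [integral_const_mul]
  congr 1
  have key : ∀ η : EE d,
      (∫ x, f x * Complex.exp (-(⟪x, l - η⟫ : ℝ) * Complex.I)) * Φ η =
      ∫ x, f x * Complex.exp (-(⟪x, l⟫ : ℝ) * Complex.I) *
        (Φ η * Complex.exp ((⟪x, η⟫ : ℝ) * Complex.I)) := by
    intro η
    rw [← integral_mul_const]
    congr 1
    ext x
    have : Complex.exp (-(⟪x, l - η⟫ : ℝ) * Complex.I) =
        Complex.exp (-(⟪x, l⟫ : ℝ) * Complex.I) * Complex.exp ((⟪x, η⟫ : ℝ) * Complex.I) := by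
      rw [← Complex.exp_add, inner_sub_right]
      push_cast
      ring_nf
    rw [this]
    ring
  simp_rw [key]
  rw [integral_integral_swap]
  · congr 1
    ext x
    rw [integral_const_mul]
    by_cases hx : f x = 0
    · simp [hx]
    · rw [hΦ.2 x (hR x hx), mul_one]
  · have h1 : Integrable (fun p : EE d × EE d => Φ p.1 * f p.2) (volume.prod volume) :=
      hΦ.1.mul_prod hf
    have h2 := h1.mul_bdd (c := 1) (g := fun p : EE d × EE d =>
      Complex.exp (((-⟪p.2, l⟫ + ⟪p.2, p.1⟫ : ℝ) : ℂ) * Complex.I))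
      (by apply Continuous.aestronglyMeasurable; fun_prop)
      (Filter.Eventually.of_forall fun p => by rw [Complex.norm_exp_ofReal_mul_I])
    refine h2.congr (Filter.Eventually.of_forall fun p => ?_)
    simp only [Function.uncurry]
    push_cast
    rw [add_mul, Complex.exp_add]
    ring

theorem FT_le (hd : 0 < d) (σ : ℝ) (hσ : 1 < σ) (f : EE d → ℂ) (hf : Integrable f)
    (hfc : HasCompactSupport f) :
    ∃ B c : ℝ, 0 ≤ B ∧ 0 < c ∧ ∀ l : EE d, ‖FT f l‖ₑ ≤
      ∫⁻ η, ‖FT f (l - η)‖ₑ * ENNReal.ofReal (B * Real.exp (-(c * ‖η‖ ^ (1 / σ)))) := by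
  obtain ⟨R, hR⟩ := hfc.isCompact.isBounded.exists_norm_le
  have hR' : ∀ x, f x ≠ 0 → ‖x‖ ≤ R := fun x hx => hR x (subset_tsupport f hx)
  obtain ⟨Ψ, B, c, hB, hc, hrep, hanti, hdec⟩ := kernels hd R σ hσ
  refine ⟨B, c, hB, hc, fun l => ?_⟩
  have hcont := FT_continuous f hf
  obtain ⟨M, hM0, hM⟩ := FT_bdd f
  have h1 : ∀ n, ‖FT f l‖ₑ ≤ ∫⁻ η, ‖FT f (l - η)‖ₑ * ‖Ψ n η‖ₑ := by
    intro n
    rw [repro (hrep n) f hf hR' l]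
    refine (enorm_integral_le_lintegral_enorm _).trans (le_of_eq ?_)
    simp_rw [enorm_mul]
  have h2 : ∫⁻ η, ⨅ n, ‖FT f (l - η)‖ₑ * ‖Ψ n η‖ₑ = ⨅ n, ∫⁻ η, ‖FT f (l - η)‖ₑ * ‖Ψ n η‖ₑ := by
    apply lintegral_iInf'
    · intro n
      refine AEMeasurable.mul ?_ (hrep n).1.1.enorm
      exact (hcont.comp (by fun_prop : Continuous fun η => l - η)).enorm.measurable.aemeasurable
    · refine Filter.Eventually.of_forall fun η => ?_
      intro m n hmn
      have := hanti η hmn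
      dsimp only at this ⊢
      gcongr
      rwa [enorm_le_iff_norm_le]
    · have : ∫⁻ η, ‖FT f (l - η)‖ₑ * ‖Ψ 0 η‖ₑ ≤ ∫⁻ η, ENNReal.ofReal M * ‖Ψ 0 η‖ₑ := by
        apply lintegral_mono
        intro η
        dsimp only
        gcongr
        rw [← ofReal_norm]
        exact ENNReal.ofReal_le_ofReal (hM _)
      refine (this.trans_lt ?_).ne
      rw [lintegral_const_mul' _ _ ENNReal.ofReal_ne_top]
      exact ENNReal.mul_lt_top ENNReal.ofReal_lt_top (hrep 0).1.2
  refine (le_iInf h1).trans (h2.symm.le.trans (lintegral_mono fun η => ?_))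
  obtain ⟨n, hn⟩ := hdec η
  refine (iInf_le _ n).trans ?_
  dsimp only
  gcongr
  rw [← ofReal_norm]
  exact ENNReal.ofReal_le_ofReal hn

end Aux2

section Aux3
open Filter Topology

def kap (η : EE d) : ℝ := ((1 + ‖η‖)⁻¹) ^ (d + 1)

theorem kap_pos (η : EE d) : 0 < kap η := by unfold kap; positivity

theorem kap_le_one (η : EE d) : kap η ≤ 1 := by
  unfold kap
  apply pow_le_one₀ (by positivity)
  apply inv_le_one_of_one_le₀
  linarith [norm_nonneg η]

theorem kap_continuous : Continuous (kap : EE d → ℝ) := by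
  unfold kap
  refine Continuous.pow (Continuous.inv₀ (by fun_prop) fun η => ?_) _
  positivity

theorem kap_integrable : Integrable (kap : EE d → ℝ) := by
  have := integrable_one_add_norm (E := EE d) (μ := volume) (r := (d:ℝ) + 1) (by simp)
  refine this.congr (Eventually.of_forall fun η => ?_)
  dsimp only
  rw [kap, inv_pow, Real.rpow_neg (by positivity)]
  congr 1
  exact_mod_cast Real.rpow_natCast (1 + ‖η‖) (d+1)

theorem growth (k c σ s : ℝ) (hσ : 0 < σ) (hs : σ < s) (hc : 0 < c) (m : ℕ) :
    ∃ C : ℝ, 0 < C ∧ ∀ t : ℝ, 0 ≤ t →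
      Real.exp (k * t ^ (1 / s)) * Real.exp (-(c * t ^ (1 / σ))) ≤ C * ((1 + t)⁻¹) ^ m := by
  have hs0 : 0 < s := hσ.trans hs
  let F : ℝ → ℝ := fun t => Real.exp (k * t ^ (1 / s)) * Real.exp (-(c * t ^ (1 / σ))) * (1 + t) ^ m
  have hF : ∃ C, ∀ t, 0 ≤ t → F t ≤ C := by
    have hlt : 0 < 1 / σ - 1 / s := by
      rw [sub_pos]; exact one_div_lt_one_div_of_lt hσ hs
    have e1 : ∀ᶠ t : ℝ in atTop, k * t ^ (1/s) ≤ c / 2 * t ^ (1/σ) := by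
      have := (tendsto_rpow_atTop hlt).eventually_ge_atTop (2 * k / c)
      filter_upwards [this, eventually_gt_atTop 0] with t ht h0
      have h1 : t ^ (1/σ) = t ^ (1/σ - 1/s) * t ^ (1/s) := by
        rw [← Real.rpow_add h0]; congr 1; ring
      rw [h1, ← mul_assoc]
      gcongr
      rw [div_le_iff₀ hc] at ht
      linarith
    have e2 : ∀ᶠ t : ℝ in atTop, (m:ℝ) * Real.log (1 + t) ≤ c / 2 * t ^ (1/σ) := by
      have h0 := (isLittleO_log_rpow_atTop (r := 1/σ) (by positivity)).bound
        (c := c / (2 * (m + 1))) (by positivity)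
      have h1 := (isLittleO_log_rpow_atTop (r := 1/σ) (by positivity)).bound
        (c := c / (4 * (m + 1))) (by positivity)
      have h2 := (tendsto_rpow_atTop (y := 1/σ) (by positivity)).eventually_ge_atTop
        (4 * (m+1) * Real.log 2 / c)
      filter_upwards [h1, h2, eventually_ge_atTop 1] with t h1 h2 h3
      rw [Real.norm_of_nonneg (Real.log_nonneg h3), Real.norm_of_nonneg (by positivity)] at h1
      have h4 : Real.log (1 + t) ≤ Real.log 2 + Real.log t := by
        rw [← Real.log_mul (by norm_num) (by linarith)]
        exact Real.log_le_log (by linarith) (by linarith)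
      have h5 : Real.log 2 ≤ c / (4 * (m+1)) * t ^ (1/σ) := by
        rw [div_le_iff₀ hc] at h2
        rw [div_mul_eq_mul_div, le_div_iff₀ (by positivity)]
        linarith
      have h6 : Real.log (1 + t) ≤ c / (2 * (m+1)) * t ^ (1/σ) := by
        refine (h4.trans (add_le_add h5 h1)).trans (le_of_eq ?_)
        field_simp; norm_num
      calc (m:ℝ) * Real.log (1 + t) ≤ (m + 1 : ℝ) * (c / (2 * (m+1)) * t ^ (1/σ)) := by
            have : 0 ≤ Real.log (1 + t) := Real.log_nonneg (by linarith)
            gcongr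
            linarith
        _ = _ := by field_simp
    obtain ⟨T, hT⟩ := eventually_atTop.mp (e1.and e2)
    have hcont : ContinuousOn F (Set.Icc 0 T) := by
      apply Continuous.continuousOn
      have := Real.continuous_rpow_const (q := 1/s) (by positivity)
      have := Real.continuous_rpow_const (q := 1/σ) (by positivity)
      fun_prop
    obtain ⟨C, hC⟩ := isCompact_Icc.bddAbove_image hcont
    refine ⟨max C 1, fun t ht => ?_⟩
    rcases le_total t T with h | h
    · exact (hC ⟨t, ⟨ht, h⟩, rfl⟩).trans (le_max_left _ _)
    · refine le_trans ?_ (le_max_right _ _)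
      obtain ⟨h1, h2⟩ := hT t h
      have h3 : (1 + t) ^ m = Real.exp (m * Real.log (1 + t)) := by
        rw [Real.exp_nat_mul, Real.exp_log (by positivity)]
      simp only [F]
      rw [h3, ← Real.exp_add, ← Real.exp_add]
      apply Real.exp_le_one_iff.mpr
      linarith
  obtain ⟨C, hC⟩ := hF
  refine ⟨max C 1, by positivity, fun t ht => ?_⟩
  have := (hC t ht).trans (le_max_left C 1)
  rw [inv_pow, ← div_eq_mul_inv, le_div_iff₀ (by positivity)]
  exact this

theorem summable_int : Summable fun k : Fin d → ℤ => ((1 + ‖k‖)⁻¹) ^ (d + 1) := by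
  let b := Pi.basisFun ℝ (Fin d)
  let L := Submodule.span ℤ (Set.range b)
  have hfr : Module.finrank ℤ L = d := by
    rw [ZLattice.rank ℝ L]; simp
  have h1 := ZLattice.summable_norm_pow_inv L (d+1) (by rw [hfr]; simp)
  have hmem : ∀ k : Fin d → ℤ, (fun i => (k i : ℝ)) ∈ L := by
    intro k
    have : (fun i => (k i : ℝ)) = ∑ i, k i • b i := by
      ext j
      simp [b, Finset.sum_apply, Pi.single_apply]
    rw [this]
    exact Submodule.sum_mem _ fun i _ => Submodule.smul_mem _ _ (Submodule.subset_span ⟨i, rfl⟩)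
  let ι : (Fin d → ℤ) → L := fun k => ⟨_, hmem k⟩
  have hι : Function.Injective ι := by
    intro k k' h
    have := congrArg Subtype.val h
    ext i
    have := congrFun this i
    simpa [ι] using this
  have hn : ∀ k, ‖ι k‖ = ‖k‖ := by
    intro k
    simp only [ι, Submodule.coe_norm]
    rw [Pi.norm_def, Pi.norm_def]
    congr 2
  have h2 := h1.comp_injective hι
  refine Summable.of_norm_bounded_eventually h2 ?_
  rw [Filter.eventually_cofinite]
  refine (Set.finite_singleton (0 : Fin d → ℤ)).subset ?_
  intro k hk
  by_contra hne
  apply hk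
  simp only [Function.comp, hn]
  have hpos : 0 < ‖k‖ := norm_pos_iff.mpr hne
  rw [Real.norm_of_nonneg (by positivity)]
  gcongr
  linarith

theorem lattice_sum (A : Matrix (Fin d) (Fin d) ℝ) (hA : IsUnit A.det) :
    ∃ S : ℝ≥0∞, S ≠ ∞ ∧ ∀ y : EE d, ∑' k, ENNReal.ofReal (kap (latPt A k - y)) ≤ S := by
  let T : EE d →L[ℝ] (Fin d → ℝ) :=
    LinearMap.toContinuousLinearMap
      ((Matrix.toLin' A⁻¹).comp (EuclideanSpace.equiv (Fin d) ℝ).toLinearEquiv.toLinearMap)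
  have hT : ∀ k, T (latPt A k) = fun i => (k i : ℝ) := by
    intro k
    change A⁻¹.mulVec (A.mulVec fun i => (k i : ℝ)) = _
    rw [Matrix.mulVec_mulVec, Matrix.nonsing_inv_mul _ hA, Matrix.one_mulVec]
  let D := ‖T‖
  have hD : 0 ≤ D := norm_nonneg _
  let h : (Fin d → ℤ) → ℝ := fun k => ((1 + ‖k‖)⁻¹) ^ (d + 1)
  have hh : Summable h := summable_int
  refine ⟨∑' k, ENNReal.ofReal ((2 + D) ^ (d+1) * h k), ?_, fun y => ?_⟩
  · exact (hh.mul_left _).tsum_ofReal_ne_top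
  · let k0 : Fin d → ℤ := fun i => ⌊T y i⌋
    rw [← (Equiv.subRight k0).tsum_eq (fun k => ENNReal.ofReal ((2 + D) ^ (d+1) * h k))]
    refine ENNReal.tsum_le_tsum fun k => ENNReal.ofReal_le_ofReal ?_
    have hb : ‖k - k0‖ ≤ D * ‖latPt A k - y‖ + 1 := by
      rw [pi_norm_le_iff_of_nonneg (by positivity)]
      intro i
      have e : ((k i - k0 i : ℤ) : ℝ) = T (latPt A k - y) i + Int.fract (T y i) := by
        rw [map_sub, hT, Pi.sub_apply, Int.fract]
        push_cast
        simp only [k0]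
        ring
      rw [Pi.sub_apply, Int.norm_eq_abs, e]
      refine (abs_add_le _ _).trans (add_le_add ?_ ?_)
      · exact (norm_le_pi_norm (T (latPt A k - y)) i).trans (T.le_opNorm _)
      · rw [abs_of_nonneg (Int.fract_nonneg _)]
        exact (Int.fract_lt_one _).le
    change kap _ ≤ (2 + D) ^ (d+1) * ((1 + ‖k - k0‖)⁻¹) ^ (d + 1)
    rw [kap, ← mul_pow]
    gcongr
    rw [inv_le_iff_one_le_mul₀ (by positivity)]
    have h0 := norm_nonneg (latPt A k - y)
    rw [mul_right_comm, ← div_eq_mul_inv, one_le_div (by positivity)]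
    nlinarith

theorem cone_gap (Γ₀ Γ : Set (EE d)) (h₀c : IsCone Γ₀) (hΓo : IsOpen Γ) (hΓc : IsCone Γ)
    (hsub : closure Γ₀ \ {0} ⊆ Γ) :
    ∃ δ : ℝ, 0 < δ ∧ δ ≤ 1 ∧ ∀ l ∈ Γ₀, ∀ η : EE d, ‖η‖ < δ * ‖l‖ → l - η ∈ Γ := by
  let K : Set (EE d) := closure Γ₀ ∩ Metric.sphere 0 1
  have hK : IsCompact K := (isCompact_sphere 0 1).inter_left isClosed_closure
  have hKΓ : K ⊆ Γ := by
    rintro x ⟨hx, hx1⟩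
    apply hsub
    refine ⟨hx, ?_⟩
    rintro rfl
    simp at hx1
  obtain ⟨δ, hδ, hd⟩ := hK.exists_thickening_subset_open hΓo hKΓ
  refine ⟨min δ 1, by positivity, min_le_right _ _, fun l hl η hη => ?_⟩
  have hl0 : l ≠ 0 := fun h => h₀c.1 (h ▸ hl)
  have hn : 0 < ‖l‖ := norm_pos_iff.mpr hl0
  have h1 : ‖l‖⁻¹ • (l - η) ∈ Γ := by
    apply hd
    rw [Metric.mem_thickening_iff]
    refine ⟨‖l‖⁻¹ • l, ⟨subset_closure (h₀c.2 l hl _ (by positivity)), ?_⟩, ?_⟩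
    · simp [norm_smul, hn.ne']
    · rw [dist_eq_norm, ← smul_sub, norm_smul, norm_inv, norm_norm]
      have : l - η - l = -η := by abel
      rw [this, norm_neg, inv_mul_lt_iff₀ hn]
      calc ‖η‖ < min δ 1 * ‖l‖ := hη
        _ ≤ ‖l‖ * δ := by rw [mul_comm]; gcongr; exact min_le_left _ _
  have := hΓc.2 _ h1 ‖l‖ hn
  rwa [smul_smul, mul_inv_cancel₀ hn.ne', one_smul] at this

end Aux3

section Aux4

theorem pointwise_s12 (s : ℝ) (hs : 1 < s) (hd : 0 < d)
    (ω : EE d → ℝ) (hω : IsSAdmissible s ω)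
    (f : EE d → ℂ) (hf : Integrable f) (hfc : HasCompactSupport f)
    (Γ₀ Γ : Set (EE d)) (h₀c : IsCone Γ₀) (hΓo : IsOpen Γ) (hΓc : IsCone Γ)
    (hsub : closure Γ₀ \ {0} ⊆ Γ) :
    ∃ C : ℝ, 0 < C ∧ ∀ l ∈ Γ₀, ENNReal.ofReal (‖FT f l‖ * ω l) ≤
      ENNReal.ofReal C *
      ((∫⁻ η, Γ.indicator (fun ξ => ENNReal.ofReal (‖FT f ξ‖ * ω ξ)) (l - η) *
        ENNReal.ofReal (kap η)) + ENNReal.ofReal (kap l)) := by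
  obtain ⟨hωm, hωp, v, hvm, hvp, hve, hvs, C₀, k₀, C₁, hC₀, hk₀, hC₁, hvb, hωv⟩ := hω
  obtain ⟨σ, hσ1, hσs⟩ := exists_between hs
  have hσ0 : 0 < σ := by linarith
  obtain ⟨B, c, hB, hc, hFT⟩ := FT_le hd σ hσ1 f hf hfc
  obtain ⟨M, hM0, hM⟩ := FT_bdd f
  obtain ⟨δ, hδ0, hδ1, hδ⟩ := cone_gap Γ₀ Γ h₀c hΓo hΓc hsub
  obtain ⟨Ca, hCa, hga⟩ := growth k₀ c σ s hσ0 hσs hc (d+1)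
  obtain ⟨Cb, hCb, hgb⟩ := growth (k₀ * (1/δ) ^ (1/s)) c σ s hσ0 hσs hc ((d+1)+(d+1))
  let W : ℝ := (∫⁻ η : EE d, ENNReal.ofReal (kap η)).toReal
  have hW : (∫⁻ η : EE d, ENNReal.ofReal (kap η)) = ENNReal.ofReal W := by
    rw [ENNReal.ofReal_toReal]
    exact kap_integrable.lintegral_lt_top.ne
  let C2 : ℝ := C₁ * C₀ * B * Ca + M * (C₁ * C₀ * ω 0) * B * Cb * (1/δ) ^ (d+1) + 1
  have hω0 := hωp 0
  have hW0 : 0 ≤ W := ENNReal.toReal_nonneg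
  have hC2 : 0 < C2 := by positivity
  refine ⟨C2 * (W + 1), by positivity, fun l hl => ?_⟩
  have hpt : ∀ η : EE d, ‖FT f (l - η)‖ₑ * ENNReal.ofReal (B * Real.exp (-(c * ‖η‖ ^ (1 / σ)))) *
      ENNReal.ofReal (ω l) ≤ ENNReal.ofReal C2 *
        (Γ.indicator (fun ξ => ENNReal.ofReal (‖FT f ξ‖ * ω ξ)) (l - η) * ENNReal.ofReal (kap η)
          + ENNReal.ofReal (kap l) * ENNReal.ofReal (kap η)) := by
    intro η
    have hB' : 0 ≤ B * Real.exp (-(c * ‖η‖ ^ (1 / σ))) := by positivity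
    rw [← ofReal_norm, ← ENNReal.ofReal_mul (norm_nonneg _), ← ENNReal.ofReal_mul (by positivity)]
    have hke := (kap_pos η).le
    have hkl := (kap_pos l).le
    by_cases hη : l - η ∈ Γ
    · rw [Set.indicator_of_mem hη]
      refine le_trans ?_ (mul_le_mul_right (le_add_of_nonneg_right (zero_le)) _)
      have hp : 0 ≤ ‖FT f (l - η)‖ * ω (l - η) := mul_nonneg (norm_nonneg _) (hωp _).le
      rw [← ENNReal.ofReal_mul hp, ← ENNReal.ofReal_mul hC2.le]
      apply ENNReal.ofReal_le_ofReal
      have h1 : ω l ≤ C₁ * (C₀ * Real.exp (k₀ * ‖η‖ ^ (1 / s))) * ω (l - η) := by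
        have := hωv η (l - η)
        rw [add_sub_cancel] at this
        refine this.trans ?_
        have := hvb η
        have := (hωp (l - η)).le
        gcongr
      have h2 := hga ‖η‖ (norm_nonneg _)
      have h3 : C₁ * C₀ * B * Ca ≤ C2 := by
        have : 0 ≤ M * (C₁ * C₀ * ω 0) * B * Cb * (1/δ) ^ (d+1) := by positivity
        simp only [C2]; linarith
      calc ‖FT f (l - η)‖ * (B * Real.exp (-(c * ‖η‖ ^ (1 / σ)))) * ω l
          ≤ ‖FT f (l - η)‖ * (B * Real.exp (-(c * ‖η‖ ^ (1 / σ)))) *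
            (C₁ * (C₀ * Real.exp (k₀ * ‖η‖ ^ (1 / s))) * ω (l - η)) := by gcongr
        _ = (C₁ * C₀ * B) * (‖FT f (l - η)‖ * ω (l - η)) *
            (Real.exp (k₀ * ‖η‖ ^ (1 / s)) * Real.exp (-(c * ‖η‖ ^ (1 / σ)))) := by ring
        _ ≤ (C₁ * C₀ * B) * (‖FT f (l - η)‖ * ω (l - η)) * (Ca * kap η) := by
            exact mul_le_mul_of_nonneg_left h2 (by positivity)
        _ = (C₁ * C₀ * B * Ca) * (‖FT f (l - η)‖ * ω (l - η) * kap η) := by ring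
        _ ≤ _ := by gcongr
    · rw [Set.indicator_of_notMem hη, zero_mul, zero_add, ← ENNReal.ofReal_mul hkl,
        ← ENNReal.ofReal_mul hC2.le]
      apply ENNReal.ofReal_le_ofReal
      have hge : δ * ‖l‖ ≤ ‖η‖ := by
        by_contra hlt
        exact hη (hδ l hl η (not_le.mp hlt))
      have hle : ‖l‖ ≤ 1 / δ * ‖η‖ := by
        rw [one_div, ← div_eq_inv_mul, le_div_iff₀ hδ0]; linarith
      have h1 : ω l ≤ C₁ * (C₀ * Real.exp (k₀ * (1/δ) ^ (1/s) * ‖η‖ ^ (1 / s))) * ω 0 := by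
        have h1 := hωv l 0
        rw [add_zero] at h1
        refine h1.trans ?_
        have h2 := hvb l
        have h3 : ‖l‖ ^ (1/s) ≤ (1/δ) ^ (1/s) * ‖η‖ ^ (1 / s) := by
          rw [← Real.mul_rpow (by positivity) (norm_nonneg _)]
          have : 0 ≤ 1/s := by positivity
          gcongr
        have h4 : v l ≤ C₀ * Real.exp (k₀ * (1/δ) ^ (1/s) * ‖η‖ ^ (1 / s)) := by
          refine h2.trans ?_
          rw [mul_assoc k₀]
          gcongr
        gcongr
      have h2 := hgb ‖η‖ (norm_nonneg _)
      have h3 : ((1 + ‖η‖)⁻¹) ^ (d+1+(d+1)) ≤ (1/δ) ^ (d+1) * kap l * kap η := by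
        have h : ((1 + ‖η‖)⁻¹) ^ (d+1) ≤ (1/δ) ^ (d+1) * kap l := by
          rw [kap, ← mul_pow]
          apply pow_le_pow_left₀ (by positivity)
          rw [one_div, ← mul_inv]
          apply inv_anti₀ (by positivity)
          nlinarith
        rw [pow_add]
        exact mul_le_mul_of_nonneg_right h (by positivity)
      have h4 : M * (C₁ * C₀ * ω 0) * B * Cb * (1/δ) ^ (d+1) ≤ C2 := by
        have : 0 ≤ C₁ * C₀ * B * Ca := by positivity
        simp only [C2]; linarith
      calc ‖FT f (l - η)‖ * (B * Real.exp (-(c * ‖η‖ ^ (1 / σ)))) * ω l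
          ≤ M * (B * Real.exp (-(c * ‖η‖ ^ (1 / σ)))) *
            (C₁ * (C₀ * Real.exp (k₀ * (1/δ) ^ (1/s) * ‖η‖ ^ (1 / s))) * ω 0) := by
              have := hM (l - η)
              have := (hωp l).le
              gcongr
        _ = M * (C₁ * C₀ * ω 0) * B *
            (Real.exp (k₀ * (1/δ) ^ (1/s) * ‖η‖ ^ (1 / s)) *
              Real.exp (-(c * ‖η‖ ^ (1 / σ)))) := by ring
        _ ≤ M * (C₁ * C₀ * ω 0) * B * (Cb * ((1/δ) ^ (d+1) * kap l * kap η)) := by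
            have := h2.trans (mul_le_mul_of_nonneg_left h3 hCb.le)
            gcongr
        _ = M * (C₁ * C₀ * ω 0) * B * Cb * (1/δ) ^ (d+1) * (kap l * kap η) := by ring
        _ ≤ _ := by gcongr
  have hmk : Measurable fun η : EE d => ENNReal.ofReal (kap η) :=
    kap_continuous.measurable.ennreal_ofReal
  have h1W : ENNReal.ofReal W ≤ ENNReal.ofReal (W+1) := ENNReal.ofReal_le_ofReal (by linarith)
  have h1W' : 1 ≤ ENNReal.ofReal (W+1) := by
    rw [← ENNReal.ofReal_one]; exact ENNReal.ofReal_le_ofReal (by linarith)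
  set I := ∫⁻ η, Γ.indicator (fun ξ => ENNReal.ofReal (‖FT f ξ‖ * ω ξ)) (l - η) *
        ENNReal.ofReal (kap η) with hI
  calc ENNReal.ofReal (‖FT f l‖ * ω l) = ‖FT f l‖ₑ * ENNReal.ofReal (ω l) := by
        rw [ENNReal.ofReal_mul (norm_nonneg _), ofReal_norm]
    _ ≤ (∫⁻ η, ‖FT f (l - η)‖ₑ * ENNReal.ofReal (B * Real.exp (-(c * ‖η‖ ^ (1 / σ))))) *
          ENNReal.ofReal (ω l) := by gcongr; exact hFT l
    _ = ∫⁻ η, ‖FT f (l - η)‖ₑ * ENNReal.ofReal (B * Real.exp (-(c * ‖η‖ ^ (1 / σ)))) *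
          ENNReal.ofReal (ω l) := by rw [lintegral_mul_const' _ _ ENNReal.ofReal_ne_top]
    _ ≤ _ := lintegral_mono hpt
    _ = ENNReal.ofReal C2 * (I + ENNReal.ofReal (kap l) * ENNReal.ofReal W) := by
        rw [lintegral_const_mul' _ _ ENNReal.ofReal_ne_top,
          lintegral_add_right _ (hmk.const_mul _), lintegral_const_mul' _ _ ENNReal.ofReal_ne_top, hW]
    _ ≤ ENNReal.ofReal C2 * (I * ENNReal.ofReal (W+1) +
          ENNReal.ofReal (kap l) * ENNReal.ofReal (W+1)) := by
        gcongr
        exact le_mul_of_one_le_right (zero_le) h1W'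
    _ = _ := by
        rw [ENNReal.ofReal_mul hC2.le]; ring

theorem jensen (q : ℝ) (hq : 1 ≤ q) (g κ : EE d → ℝ≥0∞) (hg : Measurable g) (hκ : Measurable κ) :
    (∫⁻ η, g η * κ η) ^ q ≤ (∫⁻ η, κ η) ^ (q - 1) * ∫⁻ η, g η ^ q * κ η := by
  have hq0 : 0 < q := by linarith
  have := eLpNorm'_le_eLpNorm'_mul_rpow_measure_univ (p := 1) (q := q) zero_lt_one hq
    (μ := (volume : Measure (EE d)).withDensity κ) (f := g) hg.aestronglyMeasurable
  simp only [eLpNorm', enorm_eq_self, ENNReal.rpow_one, div_one] at this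
  rw [lintegral_withDensity_eq_lintegral_mul _ hκ hg,
    lintegral_withDensity_eq_lintegral_mul _ hκ (hg.pow_const q),
    withDensity_apply _ MeasurableSet.univ, setLIntegral_univ] at this
  simp only [Pi.mul_apply] at this
  have h2 := ENNReal.rpow_le_rpow this hq0.le
  rw [ENNReal.mul_rpow_of_nonneg _ _ hq0.le, ← ENNReal.rpow_mul, ← ENNReal.rpow_mul,
    one_div_mul_cancel hq0.ne', ENNReal.rpow_one] at h2
  have e : (1 - 1 / q) * q = q - 1 := by field_simp
  rw [e] at h2
  simp_rw [mul_comm (g _) (κ _), mul_comm (g _ ^ q) (κ _)]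
  rw [mul_comm]
  exact h2

theorem main_sum (q : ℝ) (hq : 1 ≤ q) (g : EE d → ℝ≥0∞) (hg : Measurable g)
    (hgi : ∫⁻ ξ, g ξ ^ q < ∞) (A : Matrix (Fin d) (Fin d) ℝ) (hA : IsUnit A.det)
    (C : ℝ) (F : (Fin d → ℤ) → ℝ≥0∞)
    (hF : ∀ k, F k ≤ ENNReal.ofReal C * ((∫⁻ η, g (latPt A k - η) * ENNReal.ofReal (kap η)) +
      ENNReal.ofReal (kap (latPt A k)))) :
    ∑' k, F k ^ q < ∞ := by
  have hq0 : 0 < q := by linarith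
  obtain ⟨S, hS, hSb⟩ := lattice_sum A hA
  have hmk : Measurable fun η : EE d => ENNReal.ofReal (kap η) :=
    kap_continuous.measurable.ennreal_ofReal
  set W := ∫⁻ η : EE d, ENNReal.ofReal (kap η) with hW
  have hWt : W < ∞ := kap_integrable.lintegral_lt_top
  let P : (Fin d → ℤ) → ℝ≥0∞ := fun k => ∫⁻ η, g η ^ q * ENNReal.ofReal (kap (latPt A k - η))
  have h1 : ∀ k, F k ^ q ≤ (ENNReal.ofReal C ^ q * 2 ^ (q-1)) *
      (W ^ (q-1) * P k + ENNReal.ofReal (kap (latPt A k - 0))) := by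
    intro k
    have hJ := jensen q hq (fun η => g (latPt A k - η)) _ (hg.comp (measurable_const.sub measurable_id)) hmk
    have hP : ∫⁻ η, g (latPt A k - η) ^ q * ENNReal.ofReal (kap η) = P k := by
      have := lintegral_sub_left_eq_self (μ := (volume : Measure (EE d)))
        (fun η => g η ^ q * ENNReal.ofReal (kap (latPt A k - η))) (latPt A k)
      simpa using this
    rw [hP] at hJ
    calc F k ^ q ≤ _ := ENNReal.rpow_le_rpow (hF k) hq0.le
      _ = ENNReal.ofReal C ^ q * _ := ENNReal.mul_rpow_of_nonneg _ _ hq0.le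
      _ ≤ ENNReal.ofReal C ^ q * _ := mul_le_mul_right (ENNReal.rpow_add_le_mul_rpow_add_rpow _ _ hq) _
      _ ≤ _ := by
        rw [mul_assoc]
        gcongr
        rw [sub_zero]
        have hk1 : ENNReal.ofReal (kap (latPt A k)) ≤ 1 := by
          rw [← ENNReal.ofReal_one]; exact ENNReal.ofReal_le_ofReal (kap_le_one _)
        calc _ ≤ ENNReal.ofReal (kap (latPt A k)) ^ (1:ℝ) :=
              ENNReal.rpow_le_rpow_of_exponent_ge hk1 hq
          _ = _ := ENNReal.rpow_one _
  have hPs : ∑' k, P k ≤ (∫⁻ ξ, g ξ ^ q) * S := by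
    rw [← lintegral_tsum]
    · rw [← lintegral_mul_const' _ _ hS]
      refine lintegral_mono fun η => ?_
      dsimp only
      rw [ENNReal.tsum_mul_left]
      gcongr
      exact hSb η
    · intro k
      exact ((hg.pow_const q).mul
        (hmk.comp (measurable_const.sub measurable_id))).aemeasurable
  refine (ENNReal.tsum_le_tsum h1).trans_lt ?_
  rw [ENNReal.tsum_mul_left, ENNReal.tsum_add, ENNReal.tsum_mul_left]
  have hq1 : 0 ≤ q - 1 := by linarith
  refine ENNReal.mul_lt_top (ENNReal.mul_lt_top ?_ ?_) (ENNReal.add_lt_top.mpr ⟨?_, ?_⟩)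
  · exact ENNReal.rpow_lt_top_of_nonneg hq0.le ENNReal.ofReal_ne_top
  · exact ENNReal.rpow_lt_top_of_nonneg hq1 (by simp)
  · refine ENNReal.mul_lt_top (ENNReal.rpow_lt_top_of_nonneg hq1 hWt.ne) ?_
    exact hPs.trans_lt (ENNReal.mul_lt_top hgi hS.lt_top)
  · exact (hSb 0).trans_lt hS.lt_top

end Aux4

theorem stmt12 {d : ℕ} (s q : ℝ) (hs : 1 < s) (hq : 1 ≤ q)
    (ω : EuclideanSpace ℝ (Fin d) → ℝ) (hω : IsSAdmissible s ω)
    (f : EuclideanSpace ℝ (Fin d) → ℂ) (hf : Integrable f) (hfc : HasCompactSupport f)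
    (Γ₀ Γ : Set (EuclideanSpace ℝ (Fin d)))
    (h₀o : IsOpen Γ₀) (h₀c : IsCone Γ₀) (hΓo : IsOpen Γ) (hΓc : IsCone Γ)
    (hsub : closure Γ₀ \ {0} ⊆ Γ)
    (A : Matrix (Fin d) (Fin d) ℝ) (hA : IsUnit A.det)
    (h : (∫⁻ ξ in Γ, ENNReal.ofReal ((‖FT f ξ‖ * ω ξ) ^ q)) < ∞) :
    Summable fun k : Fin d → ℤ =>
      Γ₀.indicator (fun ξ => (‖FT f ξ‖ * ω ξ) ^ q) (latPt A k) := by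
  have hq0 : 0 < q := by linarith
  rcases Nat.eq_zero_or_pos d with hd | hd
  · subst hd
    have : Γ₀ = ∅ := by
      apply Set.eq_empty_of_forall_notMem
      intro x hx
      exact h₀c.1 (Subsingleton.elim x 0 ▸ hx)
    simp [this, summable_zero]
  obtain ⟨C, hC, hpt⟩ := pointwise_s12 s hs hd ω hω f hf hfc Γ₀ Γ h₀c hΓo hΓc hsub
  have hnn : ∀ ξ, 0 ≤ ‖FT f ξ‖ * ω ξ := fun ξ => mul_nonneg (norm_nonneg _) (hω.2.1 ξ).le
  let g : EE d → ℝ≥0∞ := Γ.indicator (fun ξ => ENNReal.ofReal (‖FT f ξ‖ * ω ξ))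
  have hg : Measurable g :=
    (((FT_continuous f hf).norm.measurable.mul hω.1).ennreal_ofReal).indicator hΓo.measurableSet
  have hgi : ∫⁻ ξ, g ξ ^ q < ∞ := by
    refine lt_of_le_of_lt (le_of_eq ?_) h
    rw [← lintegral_indicator hΓo.measurableSet]
    congr 1
    ext ξ
    by_cases hξ : ξ ∈ Γ
    · simp only [g, Set.indicator_of_mem hξ]
      rw [ENNReal.ofReal_rpow_of_nonneg (hnn ξ) hq0.le]
    · simp only [g, Set.indicator_of_notMem hξ]
      exact ENNReal.zero_rpow_of_pos hq0
  let F : (Fin d → ℤ) → ℝ≥0∞ := fun k =>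
    Γ₀.indicator (fun ξ => ENNReal.ofReal (‖FT f ξ‖ * ω ξ)) (latPt A k)
  have hfin := main_sum q hq g hg hgi A hA C F (fun k => by
    by_cases hk : latPt A k ∈ Γ₀
    · simp only [F, Set.indicator_of_mem hk]
      exact hpt _ hk
    · simp only [F, Set.indicator_of_notMem hk]
      exact zero_le)
  have hsum := ENNReal.summable_toReal hfin.ne
  refine hsum.congr fun k => ?_
  by_cases hk : latPt A k ∈ Γ₀
  · simp only [F, Set.indicator_of_mem hk]
    rw [ENNReal.ofReal_rpow_of_nonneg (hnn _) hq0.le, ENNReal.toReal_ofReal]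
    exact Real.rpow_nonneg (hnn _) _
  · simp only [F, Set.indicator_of_notMem hk]
    rw [ENNReal.zero_rpow_of_pos hq0]
    rfl

end Paper
end
end
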